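/- arXiv:1303.6469 — 4 statements merged into one kernel-verified Lean document; each statement's English description precedes it below -/
import Mathlib

section
/- For any pair (μ₀, μ) of finite nonnegative Borel measures, with μ₀ supported in X and μ supported in X × U, satisfying the continuous-time discounted Liouville equation, the Lebesgue measure of the support of μ₀ is at most the Lebesgue measure of the maximum controlled invariant set: λ(supp μ₀) ≤ λ(X_I). -/
open MeasureTheory

/-- The (topological) support of a Borel measure: the set of points all of whose
open neighborhoods have positive measure. -/
def msupport {α : Type*} [TopologicalSpace α] [MeasurableSpace α] (μ : Measure α) : Set α :=
  {x | ∀ s : Set α, IsOpen s → x ∈ s → 0 < μ s}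

/-- An admissible trajectory of the convexified inclusion
`ẋ(t) ∈ conv f(x(t), U)`, `x(t) ∈ X`, on `[0, ∞)`: a locally absolutely continuous
function (encoded via its a.e. derivative `d` and the integral representation
`x t = x 0 + ∫_0^t d`) whose derivative lies a.e. in the convex hull of `f(x(t), U)`
and which stays in `X` for all `t ≥ 0`. -/
def IsAdmissible {n m : ℕ} (X : Set (EuclideanSpace ℝ (Fin n)))
    (U : Set (EuclideanSpace ℝ (Fin m)))
    (f : EuclideanSpace ℝ (Fin n) → EuclideanSpace ℝ (Fin m) → EuclideanSpace ℝ (Fin n))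
    (x : ℝ → EuclideanSpace ℝ (Fin n)) : Prop :=
  (∀ t, 0 ≤ t → x t ∈ X) ∧
  ∃ d : ℝ → EuclideanSpace ℝ (Fin n),
    (∀ t, 0 ≤ t → IntervalIntegrable d volume 0 t) ∧
    (∀ t, 0 ≤ t → x t = x 0 + ∫ s in (0:ℝ)..t, d s) ∧
    (∀ᵐ t ∂(volume.restrict (Set.Ici (0:ℝ))), d t ∈ convexHull ℝ ((f (x t)) '' U))

/-- The maximum controlled invariant set of the continuous-time relaxed system. -/
def mciC {n m : ℕ} (X : Set (EuclideanSpace ℝ (Fin n))) (U : Set (EuclideanSpace ℝ (Fin m)))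
    (f : EuclideanSpace ℝ (Fin n) → EuclideanSpace ℝ (Fin m) → EuclideanSpace ℝ (Fin n)) :
    Set (EuclideanSpace ℝ (Fin n)) :=
  {x0 | ∃ x : ℝ → EuclideanSpace ℝ (Fin n), IsAdmissible X U f x ∧ x 0 = x0}

/-- The continuous-time discounted Liouville equation for the pair `(μ₀, μ)`. -/
def LiouvilleC {n m : ℕ}
    (f : EuclideanSpace ℝ (Fin n) → EuclideanSpace ℝ (Fin m) → EuclideanSpace ℝ (Fin n))
    (β : ℝ) (μ₀ : Measure (EuclideanSpace ℝ (Fin n)))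
    (μ : Measure (EuclideanSpace ℝ (Fin n) × EuclideanSpace ℝ (Fin m))) : Prop :=
  ∀ v : EuclideanSpace ℝ (Fin n) → ℝ, ContDiff ℝ 1 v →
    β * ∫ p, v p.1 ∂μ = ∫ x, v x ∂μ₀ + ∫ p, fderiv ℝ v p.1 (f p.1 p.2) ∂μ

open Set Filter Metric Topology

theorem isCompact_convexHull_of_finiteDimensional {E : Type*} [NormedAddCommGroup E]
    [NormedSpace ℝ E] [FiniteDimensional ℝ E] {s : Set E} (hs : IsCompact s) :
    IsCompact (convexHull ℝ s) := by
  let Φ (k : ℕ) : (Fin k → ℝ) × (Fin k → E) → E := fun q => ∑ i, q.1 i • q.2 i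
  let D (k : ℕ) : Set ((Fin k → ℝ) × (Fin k → E)) := stdSimplex ℝ (Fin k) ×ˢ Set.univ.pi fun _ => s
  have hD : ∀ k, IsCompact (Φ k '' D k) := fun k =>
    ((isCompact_stdSimplex ℝ (Fin k)).prod (isCompact_univ_pi fun _ => hs)).image (by fun_prop)
  have key : convexHull ℝ s =
      ⋃ k ∈ Finset.range (Module.finrank ℝ E + 2), Φ k '' D k := by
    apply Subset.antisymm
    · intro x hx
      obtain ⟨ι, _, z, w, hz, hind, hw, hsum, hzx⟩ := eq_pos_convex_span_of_mem_convexHull hx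
      have hcard : Fintype.card ι ≤ Module.finrank ℝ E + 1 := hind.card_le_finrank_succ.trans
        (by gcongr; exact Submodule.finrank_le _)
      let e := Fintype.equivFin ι
      refine mem_biUnion (x := Fintype.card ι)
        (Finset.mem_coe.2 (Finset.mem_range.2 (Nat.lt_succ_of_le hcard)))
        ⟨(w ∘ e.symm, z ∘ e.symm), ⟨⟨fun i => (hw _).le, ?_⟩, fun i _ => hz ⟨_, rfl⟩⟩, ?_⟩
      · rw [← hsum]; exact e.symm.sum_comp w
      · rw [← hzx]; exact e.symm.sum_comp fun i => w i • z i
    · simp only [iUnion_subset_iff]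
      rintro k - _ ⟨q, ⟨⟨hq0, hq1⟩, hq2⟩, rfl⟩
      exact (convex_convexHull ℝ s).sum_mem (fun i _ => hq0 i) hq1
        fun i _ => subset_convexHull ℝ s (hq2 i trivial)
  rw [key]
  exact Finset.isCompact_biUnion _ fun k _ => hD k

theorem exists_fiber_subset_thickening {E : Type*} [NormedAddCommGroup E] {G : Set (E × E)}
    (hG : IsCompact G) (x : E) {δ : ℝ} (hδ : 0 < δ) : ∃ ρ > 0, ∀ p ∈ G, dist p.1 x < ρ → p.2 ∈ thickening δ {w | (x, w) ∈ G} := by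
  have hc : IsCompact (Prod.fst '' (G \ (Prod.snd ⁻¹' thickening δ {w | (x, w) ∈ G}))) :=
    (hG.diff (isOpen_thickening.preimage continuous_snd)).image continuous_fst
  have hx : x ∈ (Prod.fst '' (G \ (Prod.snd ⁻¹' thickening δ {w | (x, w) ∈ G})))ᶜ := by
    rintro ⟨⟨_, w⟩, ⟨hw, hw'⟩, rfl⟩
    exact hw' (self_subset_thickening hδ _ hw)
  obtain ⟨ρ, hρ, hball⟩ := Metric.isOpen_iff.1 hc.isClosed.isOpen_compl x hx
  refine ⟨ρ, hρ, fun p hp hpx => ?_⟩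
  by_contra hcon
  exact hball hpx ⟨p, ⟨hp, hcon⟩, rfl⟩

section Chains

variable {E : Type*} [NormedAddCommGroup E] [NormedSpace ℝ E]

/-- `Reaches G ε T y` says that from `y` one can run for a total time `T` along straight segments
of duration at most `ε`, each one starting `ε`-close to a point `x` and having velocity `w` for
some `(x, w) ∈ G`. -/
inductive Reaches (G : Set (E × E)) (ε : ℝ) : ℝ → E → Prop
  | refl (y : E) : Reaches G ε 0 y
  | step {T h : ℝ} {y x w : E} (hG : (x, w) ∈ G) (h0 : 0 ≤ h) (hε : h ≤ ε) (hy : dist y x < ε)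
      (hT : Reaches G ε T (y + h • w)) : Reaches G ε (h + T) y

/-- On `[0, T]`, the mean velocities of `γ` over a time interval belong to every convex set
containing the velocities allowed by `G` at the points `r`-close to `γ` on this interval. -/
def FollowsOn (G : Set (E × E)) (r T : ℝ) (γ : ℝ → E) : Prop :=
  ∀ a b, 0 ≤ a → a < b → b ≤ T → ∀ K : Set E, Convex ℝ K →
    (∀ p ∈ G, (∃ s ∈ Icc a b, dist p.1 (γ s) ≤ r) → p.2 ∈ K) → (b - a)⁻¹ • (γ b - γ a) ∈ K

theorem Reaches.nonneg {G : Set (E × E)} {ε T : ℝ} {y : E} (h : Reaches G ε T y) : 0 ≤ T := by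
  induction h with
  | refl => rfl
  | step _ h0 _ _ _ ih => exact add_nonneg h0 ih

theorem Reaches.isOpen (G : Set (E × E)) (ε T : ℝ) : IsOpen {y | Reaches G ε T y} := by
  rw [isOpen_iff_mem_nhds]
  intro y hy
  induction hy with
  | refl y => exact univ_mem' Reaches.refl
  | @step T h y x w hG h0 hε hy hT ih =>
    have h1 : Tendsto (fun z => z + h • w) (𝓝 y) (𝓝 (y + h • w)) :=
      Continuous.tendsto (by fun_prop) y
    filter_upwards [h1 ih, isOpen_ball.mem_nhds (mem_ball.2 hy)] with z hz hz'
    exact .step hG h0 hε hz' hz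

theorem Reaches.exists_followsOn {G : Set (E × E)} {M ε T : ℝ} {y : E}
    (hM : ∀ p ∈ G, ‖p.2‖ ≤ M) (h : Reaches G ε T y) :
    ∃ γ : ℝ → E, γ 0 = y ∧ FollowsOn G (ε + ε * M) T γ := by
  induction h with
  | refl y => exact ⟨fun _ => y, rfl, fun a b ha hab hb => by linarith⟩
  | @step T h y x w hG h0 hε hy hT ih =>
    obtain ⟨γ, hγ0, hγ⟩ := ih
    let γ' : ℝ → E := fun s => if s ≤ h then y + s • w else γ (s - h)
    have le_h : ∀ s, s ≤ h → γ' s = y + s • w := fun s hs => if_pos hs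
    have ge_h : ∀ s, h ≤ s → γ' s = γ (s - h) := by
      intro s hs
      rcases hs.eq_or_lt with rfl | hs
      · rw [le_h _ le_rfl, sub_self, hγ0]
      · exact if_neg hs.not_ge
    have hw : ∀ a b, 0 ≤ a → a < b → a ≤ h → ∀ K : Set E,
        (∀ p ∈ G, (∃ s ∈ Icc a b, dist p.1 (γ' s) ≤ ε + ε * M) → p.2 ∈ K) → w ∈ K := by
      intro a b ha hab hah K hK
      refine hK _ hG ⟨a, left_mem_Icc.2 hab.le, ?_⟩
      rw [le_h a hah]
      have h1 : dist y (y + a • w) ≤ ε * M := by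
        rw [dist_self_add_right, norm_smul, Real.norm_of_nonneg ha]
        exact mul_le_mul (hah.trans hε) (hM _ hG) (norm_nonneg _) (ha.trans (hah.trans hε))
      have h2 := dist_triangle x y (y + a • w)
      rw [dist_comm x y] at h2
      simp only
      linarith
    refine ⟨γ', by simp [le_h 0 h0], fun a b ha hab hb K hK hGK => ?_⟩
    have later : ∀ c, a ≤ c → h ≤ c → c < b → (b - c)⁻¹ • (γ (b - h) - γ (c - h)) ∈ K := by
      intro c hac hhc hcb
      have := hγ (c - h) (b - h) (by linarith) (by linarith) (by linarith) K hK ?_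
      · rwa [sub_sub_sub_cancel_right] at this
      · rintro p hp ⟨s, hs, hps⟩
        refine hGK p hp ⟨s + h, ⟨by linarith [hs.1], by linarith [hs.2]⟩, ?_⟩
        rwa [ge_h _ (by linarith [hs.1]), add_sub_cancel_right]
    rcases le_or_gt b h with hbh | hbh
    · have : (b - a)⁻¹ • (γ' b - γ' a) = w := by
        rw [le_h b hbh, le_h a (hab.le.trans hbh), add_sub_add_left_eq_sub, ← sub_smul, smul_smul,
          inv_mul_cancel₀ (sub_pos.2 hab).ne', one_smul]
      rw [this]
      exact hw a b ha hab (hab.le.trans hbh) K hGK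
    rcases le_or_gt h a with hah | hah
    · rw [ge_h a hah, ge_h b hbh.le]
      exact later a le_rfl hah hab
    · have hba : (b - a) ≠ 0 := (sub_pos.2 hab).ne'
      have hbh' : (b - h) ≠ 0 := (sub_pos.2 hbh).ne'
      have h1 := hK (hw a b ha hab hah.le K hGK) (later h hah.le le_rfl hbh)
        (a := (h - a) / (b - a)) (b := (b - h) / (b - a))
        (div_nonneg (by linarith) (by linarith)) (div_nonneg (by linarith) (by linarith))
        (by field_simp; ring)
      convert h1 using 1
      rw [ge_h b hbh.le, le_h a hah.le, sub_self, hγ0, smul_smul]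
      have : (b - h) / (b - a) * (b - h)⁻¹ = (b - a)⁻¹ := by field_simp
      rw [this, div_eq_inv_mul, mul_smul, ← smul_add]
      congr 1
      module

theorem FollowsOn.norm_sub_le {G : Set (E × E)} {M r T : ℝ} {γ : ℝ → E}
    (hM : ∀ p ∈ G, ‖p.2‖ ≤ M) (h : FollowsOn G r T γ) {a b : ℝ} (ha : 0 ≤ a) (hab : a ≤ b)
    (hb : b ≤ T) : ‖γ b - γ a‖ ≤ M * (b - a) := by
  rcases hab.eq_or_lt with rfl | hab
  · simp
  have h1 := h a b ha hab hb (closedBall 0 M) (convex_closedBall 0 M)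
    fun p hp _ => mem_closedBall_zero_iff.2 (hM p hp)
  rw [mem_closedBall_zero_iff, norm_smul, norm_inv, Real.norm_of_nonneg (sub_pos.2 hab).le,
    inv_mul_le_iff₀ (sub_pos.2 hab)] at h1
  linarith

/-- Pointwise limits of curves following `G` more and more closely. -/
theorem exists_limit_of_followsOn [ProperSpace E] {G : Set (E × E)} {M : ℝ}
    (hM : ∀ p ∈ G, ‖p.2‖ ≤ M) {γ : ℕ → ℝ → E} {r T : ℕ → ℝ} {y : E}
    (hγ : ∀ k, FollowsOn G (r k) (T k) (γ k)) (hr : Tendsto r atTop (𝓝 0))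
    (hT : Tendsto T atTop atTop) (hy : Tendsto (fun k => γ k 0) atTop (𝓝 y)) :
    ∃ x : ℝ → E, x 0 = y ∧ ∀ a b, 0 ≤ a → a < b → ∀ ρ, M * (b - a) < ρ →
      ∀ K : Set E, Convex ℝ K → IsClosed K → (∀ p ∈ G, dist p.1 (x a) < ρ → p.2 ∈ K) →
        (b - a)⁻¹ • (x b - x a) ∈ K := by
  let l : Ultrafilter ℕ := hyperfilter ℕ
  have hl : (l : Filter ℕ) ≤ atTop := Nat.hyperfilter_le_atTop
  have hlim : ∀ t, 0 ≤ t → ∃ z, Tendsto (fun k => γ k t) l (𝓝 z) := by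
    intro t ht
    have hmem : ∀ᶠ k in (l : Filter ℕ), γ k t ∈ closedBall y (1 + M * t) := by
      filter_upwards [hl (hy (ball_mem_nhds y one_pos)), hl (hT.eventually_ge_atTop t)]
        with k hk hkt
      have h1 := (hγ k).norm_sub_le hM le_rfl ht hkt
      have h2 := dist_triangle (γ k t) (γ k 0) y
      rw [dist_eq_norm (γ k t) (γ k 0)] at h2
      have h3 : dist (γ k 0) y < 1 := hk
      rw [mem_closedBall]
      linarith
    obtain ⟨z, -, hz⟩ := (isCompact_closedBall y (1 + M * t)).ultrafilter_le_nhds'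
      (l.map fun k => γ k t) hmem
    exact ⟨z, hz⟩
  choose! x hx using hlim
  refine ⟨x, tendsto_nhds_unique (hx 0 le_rfl) (hy.mono_left hl), ?_⟩
  intro a b ha hab ρ hρ K hK hKc hGK
  refine hKc.mem_of_tendsto (((hx b (ha.trans hab.le)).sub (hx a ha)).const_smul _)
    (b := (l : Filter ℕ)) ?_
  have hη : 0 < (ρ - M * (b - a)) / 2 := by linarith
  filter_upwards [hl (hT.eventually_ge_atTop b), hx a ha (ball_mem_nhds _ hη),
    hl (hr.eventually_lt_const hη)] with k hkT hka hkr
  refine hγ k a b ha hab hkT K hK ?_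
  rintro p hp ⟨s, hs, hps⟩
  refine hGK p hp ?_
  have h1 := (hγ k).norm_sub_le hM ha hs.1 (hs.2.trans hkT)
  have h2 : dist (γ k a) (x a) < _ := hka
  have h3 := dist_triangle4 p.1 (γ k s) (γ k a) (x a)
  rw [dist_eq_norm (γ k s)] at h3
  have hM0 : 0 ≤ M := (norm_nonneg _).trans (hM p hp)
  have h4 : M * (s - a) ≤ M * (b - a) := by gcongr; exact hs.2
  linarith

end Chains

theorem LipschitzWith.integral_deriv_eq_sub_euclidean {n : ℕ} {M : NNReal}
    {x : ℝ → EuclideanSpace ℝ (Fin n)} (hx : LipschitzWith M x) (a b : ℝ) :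
    IntervalIntegrable (deriv x) volume a b ∧ ∫ t in a..b, deriv x t = x b - x a := by
  have hint : IntervalIntegrable (deriv x) volume a b :=
    (intervalIntegrable_const (c := (M : ℝ))).mono_fun (aestronglyMeasurable_deriv _ _)
      (Eventually.of_forall fun t => by
        simpa using norm_deriv_le_of_lipschitz (x₀ := t) hx)
  refine ⟨hint, ?_⟩
  ext i
  let P : EuclideanSpace ℝ (Fin n) →L[ℝ] ℝ := EuclideanSpace.proj i
  have hP : AbsolutelyContinuousOnInterval (P ∘ x) a b :=
    (P.lipschitz.comp hx).lipschitzOnWith.absolutelyContinuousOnInterval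
  have h1 : P (∫ t in a..b, deriv x t) = ∫ t in a..b, P (deriv x t) :=
    (P.intervalIntegral_comp_comm hint).symm
  have h2 : ∫ t in a..b, P (deriv x t) = ∫ t in a..b, deriv (P ∘ x) t := by
    refine intervalIntegral.integral_congr_ae ?_
    filter_upwards [hx.ae_differentiableAt] with t ht _
    exact (P.hasFDerivAt.comp_hasDerivAt t ht.hasDerivAt).deriv.symm
  have h3 := h1.trans (h2.trans hP.integral_deriv_eq_sub)
  simpa [P] using h3

/-- A point which is the limit of starting points of curves following the graph of the dynamics
more and more closely over longer and longer times is controlled invariant. -/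
theorem mem_mciC_of_tendsto_followsOn {n m : ℕ} {X : Set (EuclideanSpace ℝ (Fin n))}
    {U : Set (EuclideanSpace ℝ (Fin m))} (hX : IsCompact X) (hU : IsCompact U)
    {f : EuclideanSpace ℝ (Fin n) → EuclideanSpace ℝ (Fin m) → EuclideanSpace ℝ (Fin n)}
    (hf : Continuous fun p : EuclideanSpace ℝ (Fin n) × EuclideanSpace ℝ (Fin m) => f p.1 p.2)
    {M : ℝ} (hM0 : 0 ≤ M) (hM : ∀ p ∈ (fun q => (q.1, f q.1 q.2)) '' X ×ˢ U, ‖p.2‖ ≤ M)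
    {γ : ℕ → ℝ → EuclideanSpace ℝ (Fin n)} {r T : ℕ → ℝ} {y : EuclideanSpace ℝ (Fin n)}
    (hγ : ∀ k, FollowsOn ((fun q => (q.1, f q.1 q.2)) '' X ×ˢ U) (r k) (T k) (γ k))
    (hr : Tendsto r atTop (𝓝 0)) (hT : Tendsto T atTop atTop)
    (hy : Tendsto (fun k => γ k 0) atTop (𝓝 y)) : y ∈ mciC X U f := by
  set G := (fun q : EuclideanSpace ℝ (Fin n) × EuclideanSpace ℝ (Fin m) => (q.1, f q.1 q.2)) ''
    X ×ˢ U
  have hG : IsCompact G := (hX.prod hU).image (continuous_fst.prodMk hf)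
  obtain ⟨x, hx0, hx⟩ := exists_limit_of_followsOn hM hγ hr hT hy
  have hxX : ∀ t, 0 ≤ t → x t ∈ X := by
    intro t ht
    rw [← hX.isClosed.closure_eq, Metric.mem_closure_iff]
    intro ρ hρ
    by_contra! hcon
    have hM1 : 0 < M + 1 := by linarith
    refine hx t (t + ρ / (M + 1)) ht (lt_add_of_pos_right _ (div_pos hρ hM1)) ρ ?_ ∅ convex_empty
      isClosed_empty ?_
    · rw [add_sub_cancel_left, mul_div_assoc', div_lt_iff₀ hM1]
      nlinarith
    · rintro _ ⟨q, hq, rfl⟩ hd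
      rw [dist_comm] at hd
      exact absurd hd (hcon q.1 hq.1).not_gt
  have hlip : ∀ a b, 0 ≤ a → a ≤ b → ‖x b - x a‖ ≤ M * (b - a) := by
    intro a b ha hab
    rcases hab.eq_or_lt with rfl | hab
    · simp
    have h1 := hx a b ha hab (M * (b - a) + 1) (by linarith) (closedBall 0 M)
      (convex_closedBall 0 M) isClosed_closedBall fun p hp _ => mem_closedBall_zero_iff.2 (hM p hp)
    rw [mem_closedBall_zero_iff, norm_smul, norm_inv, Real.norm_of_nonneg (sub_pos.2 hab).le,
      inv_mul_le_iff₀ (sub_pos.2 hab)] at h1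
    linarith
  let z : ℝ → EuclideanSpace ℝ (Fin n) := fun t => x (max t 0)
  have hzx : ∀ t, 0 ≤ t → z t = x t := fun t ht => by simp [z, ht]
  have hz : LipschitzWith M.toNNReal z := by
    refine LipschitzWith.of_dist_le_mul fun s t => ?_
    rw [Real.coe_toNNReal _ hM0]
    wlog hst : s ≤ t generalizing s t
    · rw [dist_comm, dist_comm s]
      exact this t s (le_of_not_ge hst)
    rw [dist_comm, dist_eq_norm, dist_comm s, Real.dist_eq, abs_of_nonneg (sub_nonneg.2 hst)]
    refine (hlip _ _ (le_max_right s 0) (max_le_max_right 0 hst)).trans ?_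
    refine mul_le_mul_of_nonneg_left ?_ hM0
    have := max_sub_max_le_max t 0 s 0
    rwa [sub_self, max_eq_left (sub_nonneg.2 hst)] at this
  refine ⟨z, ⟨fun t ht => hzx t ht ▸ hxX t ht, deriv z,
    fun t _ => (hz.integral_deriv_eq_sub_euclidean 0 t).1,
    fun t _ => by rw [(hz.integral_deriv_eq_sub_euclidean 0 t).2]; abel, ?_⟩, ?_⟩
  swap
  · rw [hzx 0 le_rfl, hx0]
  rw [ae_restrict_iff' measurableSet_Ici]
  filter_upwards [hz.ae_differentiableAt] with t htd (ht : 0 ≤ t)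
  have hfib : {w | (x t, w) ∈ G} = f (x t) '' U := by
    ext w
    constructor
    · rintro ⟨q, hq, hqw⟩
      obtain ⟨h1, h2⟩ := Prod.mk.inj hqw
      exact ⟨q.2, hq.2, by rw [← h1, ← h2]⟩
    · rintro ⟨u, hu, rfl⟩
      exact ⟨(x t, u), ⟨hxX t ht, hu⟩, rfl⟩
  have hC : IsCompact (convexHull ℝ (f (x t) '' U)) :=
    isCompact_convexHull_of_finiteDimensional
      (hU.image (hf.comp (continuous_const.prodMk continuous_id)))
  rw [hzx t ht, ← hC.isClosed.closure_eq, closure_eq_iInter_cthickening]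
  refine mem_iInter₂.2 fun δ hδ => ?_
  obtain ⟨ρ, hρ, hGρ⟩ := exists_fiber_subset_thickening hG (x t) hδ
  rw [hfib] at hGρ
  have hslope : Tendsto (slope z t) (𝓝[>] t) (𝓝 (deriv z t)) :=
    htd.hasDerivAt.tendsto_slope.mono_left (nhdsWithin_mono _ fun s (hs : t < s) => hs.ne')
  refine isClosed_cthickening.mem_of_tendsto hslope ?_
  have hnear : ∀ᶠ s in 𝓝[>] t, M * (s - t) < ρ := by
    refine nhdsWithin_le_nhds (Tendsto.eventually_lt_const hρ ?_)
    have : Continuous fun s => M * (s - t) := by fun_prop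
    simpa using this.tendsto t
  filter_upwards [hnear, self_mem_nhdsWithin] with s hs (hts : t < s)
  rw [slope_def_module, hzx t ht, hzx s (ht.trans hts.le)]
  exact hx t s ht hts ρ hs _ ((convex_convexHull ℝ _).cthickening δ) isClosed_cthickening
    fun p hp hd => cthickening_subset_of_subset δ (subset_convexHull ℝ _)
      (thickening_subset_cthickening δ _ (hGρ p hp hd))

section EscapeCost

variable {E : Type*} [NormedAddCommGroup E] [NormedSpace ℝ E]

/-- The infimum of `exp (-β T)` over the durations `T` of the `ε`-chains of `G` starting at `y`. -/
noncomputable def escapeCost (G : Set (E × E)) (ε β : ℝ) (y : E) : ℝ :=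
  sInf ((fun T => Real.exp (-(β * T))) '' {T | Reaches G ε T y})

variable {G : Set (E × E)} {ε β : ℝ}

theorem escapeCost_bddBelow (y : E) :
    BddBelow ((fun T => Real.exp (-(β * T))) '' {T | Reaches G ε T y}) :=
  ⟨0, by rintro _ ⟨T, -, rfl⟩; exact (Real.exp_pos _).le⟩

theorem escapeCost_nonempty (y : E) :
    ((fun T => Real.exp (-(β * T))) '' {T | Reaches G ε T y}).Nonempty :=
  ⟨_, 0, Reaches.refl y, rfl⟩

theorem escapeCost_nonneg (y : E) : 0 ≤ escapeCost G ε β y :=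
  le_csInf (escapeCost_nonempty y) (by rintro _ ⟨T, -, rfl⟩; exact (Real.exp_pos _).le)

theorem escapeCost_le {T : ℝ} {y : E} (h : Reaches G ε T y) :
    escapeCost G ε β y ≤ Real.exp (-(β * T)) :=
  csInf_le (escapeCost_bddBelow y) ⟨T, h, rfl⟩

theorem escapeCost_le_one (y : E) : escapeCost G ε β y ≤ 1 := by
  simpa using escapeCost_le (β := β) (Reaches.refl (G := G) (ε := ε) y)

theorem exists_reaches_of_escapeCost_lt {y : E} {c : ℝ} (h : escapeCost G ε β y < c) :
    ∃ T, Reaches G ε T y ∧ Real.exp (-(β * T)) < c := by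
  obtain ⟨_, ⟨T, hT, rfl⟩, hc⟩ := exists_lt_of_csInf_lt (escapeCost_nonempty y) h
  exact ⟨T, hT, hc⟩

theorem exists_reaches_of_escapeCost_eq_zero (hβ : 0 < β) {y : E} (h : escapeCost G ε β y = 0)
    (k : ℝ) : ∃ T, k ≤ T ∧ Reaches G ε T y := by
  obtain ⟨T, hT, hlt⟩ := exists_reaches_of_escapeCost_lt (h.trans_lt (Real.exp_pos (-(β * k))))
  rw [Real.exp_lt_exp, neg_lt_neg_iff] at hlt
  exact ⟨T, (lt_of_mul_lt_mul_left hlt hβ.le).le, hT⟩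

theorem measurable_escapeCost [MeasurableSpace E] [BorelSpace E] :
    Measurable (escapeCost G ε β) := by
  refine measurable_of_Iio fun c => IsOpen.measurableSet ?_
  have : escapeCost G ε β ⁻¹' Iio c =
      ⋃ T ∈ {T | Real.exp (-(β * T)) < c}, {y | Reaches G ε T y} := by
    ext y
    simp only [mem_preimage, mem_Iio, mem_ofPred_eq, mem_iUnion, exists_prop]
    refine ⟨fun h => ?_, fun ⟨T, hc, hT⟩ => (escapeCost_le hT).trans_lt hc⟩
    obtain ⟨T, hT, hc⟩ := exists_reaches_of_escapeCost_lt h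
    exact ⟨T, hc, hT⟩
  rw [this]
  exact isOpen_biUnion fun T _ => Reaches.isOpen G ε T

theorem exp_mul_escapeCost_le {x w y : E} {h : ℝ} (hG : (x, w) ∈ G) (h0 : 0 ≤ h) (hε : h ≤ ε)
    (hy : dist y x < ε) :
    Real.exp (β * h) * escapeCost G ε β y ≤ escapeCost G ε β (y + h • w) := by
  refine le_csInf (escapeCost_nonempty _) ?_
  rintro _ ⟨T, hT, rfl⟩
  refine (mul_le_mul_of_nonneg_left (escapeCost_le (Reaches.step hG h0 hε hy hT))
    (Real.exp_pos _).le).trans_eq ?_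
  rw [← Real.exp_add]
  congr 1
  ring

/-- A smooth subsolution of the discounted transport inequality along `G`, vanishing only
where arbitrarily long `ε`-chains start nearby. -/
theorem exists_contDiff_subsolution [FiniteDimensional ℝ E] [MeasurableSpace E] [BorelSpace E]
    (G : Set (E × E)) (hβ : 0 < β) (hε : 0 < ε) :
    ∃ v : E → ℝ, ContDiff ℝ 1 v ∧ (∀ x, 0 ≤ v x) ∧ (∀ x, v x ≤ 1) ∧
      (∀ p ∈ G, β * v p.1 ≤ fderiv ℝ v p.1 p.2) ∧
      ∀ x, v x = 0 → ∃ y, dist y x < ε ∧ ∀ k, ∃ T, k ≤ T ∧ Reaches G ε T y := by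
  let μ : Measure E := Measure.addHaar
  let φ : ContDiffBump (0 : E) := ⟨ε / 2, ε, half_pos hε, half_lt_self hε⟩
  let ψ : E → ℝ := φ.normed μ
  let W : E → ℝ := escapeCost G ε β
  let v : E → ℝ := fun x => ∫ t, ψ t * W (x - t) ∂μ
  have hψ0 : ∀ t, 0 ≤ ψ t := φ.nonneg_normed
  have hWm : Measurable W := measurable_escapeCost
  have hW0 : ∀ t, 0 ≤ W t := escapeCost_nonneg
  have hW1 : ∀ t, W t ≤ 1 := escapeCost_le_one
  have hψi : Integrable ψ μ := φ.integrable_normed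
  have hint : ∀ x, Integrable (fun t => ψ t * W (x - t)) μ := fun x =>
    hψi.mul_bdd (c := 1) (hWm.comp (measurable_const.sub measurable_id)).aestronglyMeasurable
      (Eventually.of_forall fun t => by
        rw [Real.norm_of_nonneg (hW0 _)]; exact hW1 _)
  have hψsupp : ∀ t, ψ t ≠ 0 ↔ ‖t‖ < ε := fun t => by
    rw [← Function.mem_support, φ.support_normed_eq, mem_ball_zero_iff]
  have hvC : ContDiff ℝ 1 v := by
    have hWl : LocallyIntegrable W μ :=
      (locallyIntegrable_const (1 : ℝ)).mono hWm.aestronglyMeasurable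
        (Eventually.of_forall fun t => by
          rw [Real.norm_of_nonneg (hW0 _), norm_one]; exact hW1 _)
    exact φ.hasCompactSupport_normed.contDiff_convolution_left
      (ContinuousLinearMap.lsmul ℝ ℝ) (n := 1) φ.contDiff_normed hWl
  have hv0 : ∀ x, 0 ≤ v x := fun x => integral_nonneg fun t => mul_nonneg (hψ0 t) (hW0 _)
  refine ⟨v, hvC, hv0, fun x => ?_, ?_, fun x hx => ?_⟩
  · calc v x ≤ ∫ t, ψ t ∂μ :=
          integral_mono (hint x) hψi fun t => mul_le_of_le_one_right (hψ0 t) (hW1 _)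
      _ = 1 := φ.integral_normed
  · rintro ⟨x, w⟩ hp
    have hgrow : ∀ h, 0 ≤ h → h ≤ ε → Real.exp (β * h) * v x ≤ v (x + h • w) := by
      intro h h0 hhε
      simp only [v]
      rw [← integral_const_mul]
      refine integral_mono ((hint x).const_mul _) (hint _) fun t => ?_
      by_cases ht : ψ t = 0
      · simp [ht]
      have hd : dist (x - t) x < ε := by
        rw [dist_self_sub_left]
        exact (hψsupp t).1 ht
      have := exp_mul_escapeCost_le (β := β) hp h0 hhε hd
      rw [sub_add_eq_add_sub] at this
      calc Real.exp (β * h) * (ψ t * W (x - t)) = ψ t * (Real.exp (β * h) * W (x - t)) := by ring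
        _ ≤ ψ t * W (x + h • w - t) := mul_le_mul_of_nonneg_left this (hψ0 t)
    have hline : HasDerivAt (fun h : ℝ => v (x + h • w)) (fderiv ℝ v x w) 0 := by
      have h1 : HasDerivAt (fun h : ℝ => x + h • w) w 0 := by
        simpa using ((hasDerivAt_id (0 : ℝ)).smul_const w).const_add x
      have h2 : HasFDerivAt v (fderiv ℝ v x) (x + (0 : ℝ) • w) := by
        rw [zero_smul, add_zero]
        exact (hvC.differentiable one_ne_zero x).hasFDerivAt
      exact h2.comp_hasDerivAt (0 : ℝ) h1
    have hslope := hline.tendsto_slope.mono_left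
      (nhdsWithin_mono (0 : ℝ) (s := Ioi 0) fun s hs => ne_of_gt hs)
    refine ge_of_tendsto hslope ?_
    filter_upwards [Ioc_mem_nhdsGT hε] with h hh
    have h1 := hgrow h hh.1.le hh.2
    have h2 := mul_le_mul_of_nonneg_right (Real.add_one_le_exp (β * h)) (hv0 x)
    rw [slope_def_field, sub_zero, le_div_iff₀ hh.1, zero_smul, add_zero]
    nlinarith
  · have hae := (integral_eq_zero_iff_of_nonneg (fun t => mul_nonneg (hψ0 t) (hW0 _))
      (hint x)).1 hx
    obtain ⟨t, ht, ht0⟩ : ∃ t ∈ ball (0 : E) ε, ψ t * W (x - t) = 0 := by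
      by_contra! hcon
      exact (measure_ball_pos μ (0 : E) hε).ne'
        (measure_mono_null (fun t ht => hcon t ht) (ae_iff.1 hae))
    rw [mem_ball_zero_iff] at ht
    refine ⟨x - t, by rwa [dist_self_sub_left], ?_⟩
    exact exists_reaches_of_escapeCost_eq_zero hβ
      ((mul_eq_zero.1 ht0).resolve_left ((hψsupp t).2 ht))

end EscapeCost

theorem measure_compl_msupport {α : Type*} [TopologicalSpace α] [SecondCountableTopology α]
    [MeasurableSpace α] (μ : Measure α) : μ (msupport μ)ᶜ = 0 := by
  refine measure_null_of_locally_null _ fun x hx => ?_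
  simp only [msupport, mem_compl_iff, mem_ofPred_eq, not_forall, not_lt, nonpos_iff_eq_zero] at hx
  obtain ⟨s, hs, hxs, h0⟩ := hx
  exact ⟨s, mem_nhdsWithin_of_mem_nhds (hs.mem_nhds hxs), h0⟩

/-- A nonnegative bounded subsolution vanishes on the support of the initial measure. -/
theorem LiouvilleC.eq_zero_of_mem_msupport {n m : ℕ}
    {X : Set (EuclideanSpace ℝ (Fin n))} {U : Set (EuclideanSpace ℝ (Fin m))}
    (hX : IsCompact X) (hU : IsCompact U)
    {f : EuclideanSpace ℝ (Fin n) → EuclideanSpace ℝ (Fin m) → EuclideanSpace ℝ (Fin n)}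
    (hf : Continuous fun p : EuclideanSpace ℝ (Fin n) × EuclideanSpace ℝ (Fin m) => f p.1 p.2)
    {β : ℝ} {μ₀ : Measure (EuclideanSpace ℝ (Fin n))}
    {μ : Measure (EuclideanSpace ℝ (Fin n) × EuclideanSpace ℝ (Fin m))}
    [IsFiniteMeasure μ₀] [IsFiniteMeasure μ] (hsupp : msupport μ ⊆ X ×ˢ U)
    (hL : LiouvilleC f β μ₀ μ) {v : EuclideanSpace ℝ (Fin n) → ℝ} (hv : ContDiff ℝ 1 v)
    (hv0 : ∀ x, 0 ≤ v x) (hv1 : ∀ x, v x ≤ 1)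
    (hsub : ∀ x ∈ X, ∀ u ∈ U, β * v x ≤ fderiv ℝ v x (f x u))
    {x : EuclideanSpace ℝ (Fin n)} (hx : x ∈ msupport μ₀) : v x = 0 := by
  have hae : ∀ᵐ p ∂μ, p ∈ X ×ˢ U :=
    measure_mono_null (compl_subset_compl.2 hsupp) (measure_compl_msupport μ)
  have hvb : ∀ x, ‖v x‖ ≤ 1 := fun x => by rw [Real.norm_of_nonneg (hv0 x)]; exact hv1 x
  have hvc := hv.continuous
  have hi0 : Integrable v μ₀ :=
    .of_bound hvc.aestronglyMeasurable 1 (Eventually.of_forall hvb)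
  have hi1 : Integrable (fun p => v p.1) μ :=
    .of_bound (hvc.comp continuous_fst).aestronglyMeasurable 1 (Eventually.of_forall fun p => hvb _)
  have hdc : Continuous fun p : EuclideanSpace ℝ (Fin n) × EuclideanSpace ℝ (Fin m) =>
      fderiv ℝ v p.1 (f p.1 p.2) :=
    ((hv.continuous_fderiv one_ne_zero).comp continuous_fst).clm_apply hf
  obtain ⟨C, hC⟩ := (hX.prod hU).exists_bound_of_continuousOn hdc.continuousOn
  have hi2 : Integrable (fun p => fderiv ℝ v p.1 (f p.1 p.2)) μ :=
    .of_bound hdc.aestronglyMeasurable C (hae.mono hC)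
  have hle : β * ∫ p, v p.1 ∂μ ≤ ∫ p, fderiv ℝ v p.1 (f p.1 p.2) ∂μ := by
    rw [← integral_const_mul]
    exact integral_mono_ae (hi1.const_mul β) hi2 (hae.mono fun p hp => hsub _ hp.1 _ hp.2)
  have hzero : ∫ x, v x ∂μ₀ = 0 :=
    le_antisymm (by linarith [hL v hv]) (integral_nonneg hv0)
  have hv0ae := (integral_eq_zero_iff_of_nonneg hv0 hi0).1 hzero
  by_contra hne
  exact (hx {x | v x ≠ 0} (isOpen_ne_fun hvc continuous_const) hne).ne' (ae_iff.1 hv0ae)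

theorem msupport_initial_subset_mciC {n m : ℕ}
    {X : Set (EuclideanSpace ℝ (Fin n))} {U : Set (EuclideanSpace ℝ (Fin m))}
    (hX : IsCompact X) (hU : IsCompact U)
    {f : EuclideanSpace ℝ (Fin n) → EuclideanSpace ℝ (Fin m) → EuclideanSpace ℝ (Fin n)}
    (hf : Continuous fun p : EuclideanSpace ℝ (Fin n) × EuclideanSpace ℝ (Fin m) => f p.1 p.2)
    {β : ℝ} (hβ : 0 < β) {μ₀ : Measure (EuclideanSpace ℝ (Fin n))}
    {μ : Measure (EuclideanSpace ℝ (Fin n) × EuclideanSpace ℝ (Fin m))}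
    [IsFiniteMeasure μ₀] [IsFiniteMeasure μ] (hsupp : msupport μ ⊆ X ×ˢ U)
    (hL : LiouvilleC f β μ₀ μ) : msupport μ₀ ⊆ mciC X U f := by
  intro x hx
  set G := (fun q : EuclideanSpace ℝ (Fin n) × EuclideanSpace ℝ (Fin m) => (q.1, f q.1 q.2)) ''
    X ×ˢ U
  obtain ⟨C, hC⟩ := (hX.prod hU).exists_bound_of_continuousOn hf.continuousOn
  have hM : ∀ p ∈ G, ‖p.2‖ ≤ max C 0 := by
    rintro _ ⟨q, hq, rfl⟩
    exact (hC q hq).trans (le_max_left _ _)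
  have hstep : ∀ k : ℕ, ∃ (γ : ℝ → EuclideanSpace ℝ (Fin n)) (T : ℝ),
      dist (γ 0) x < 1 / ((k : ℝ) + 1) ∧ (k : ℝ) ≤ T ∧
      FollowsOn G (1 / ((k : ℝ) + 1) + 1 / ((k : ℝ) + 1) * max C 0) T γ := by
    intro k
    obtain ⟨v, hv, hv0, hv1, hsub, hvz⟩ :=
      exists_contDiff_subsolution G hβ (ε := 1 / ((k : ℝ) + 1)) (by positivity)
    obtain ⟨y, hyx, hy⟩ := hvz x (hL.eq_zero_of_mem_msupport hX hU hf hsupp hv hv0 hv1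
      (fun x hx u hu => hsub (x, f x u) ⟨(x, u), ⟨hx, hu⟩, rfl⟩) hx)
    obtain ⟨T, hkT, hT⟩ := hy k
    obtain ⟨γ, rfl, hγ⟩ := hT.exists_followsOn hM
    exact ⟨γ, T, hyx, hkT, hγ⟩
  choose γ T hγx hkT hγ using hstep
  have h1 := tendsto_one_div_add_atTop_nhds_zero_nat (𝕜 := ℝ)
  refine mem_mciC_of_tendsto_followsOn hX hU hf (le_max_right C 0) hM hγ ?_
    (tendsto_atTop_mono hkT tendsto_natCast_atTop_atTop) ?_
  · simpa using h1.add (h1.mul_const (max C 0))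
  · exact tendsto_iff_dist_tendsto_zero.2
      (squeeze_zero (fun _ => dist_nonneg) (fun k => (hγx k).le) h1)

theorem volume_support_initial_le_volume_MCI {n m : ℕ}
    (X : Set (EuclideanSpace ℝ (Fin n))) (U : Set (EuclideanSpace ℝ (Fin m)))
    (hX : IsCompact X) (hU : IsCompact U)
    (f : EuclideanSpace ℝ (Fin n) → EuclideanSpace ℝ (Fin m) → EuclideanSpace ℝ (Fin n))
    (hf : Continuous fun p : EuclideanSpace ℝ (Fin n) × EuclideanSpace ℝ (Fin m) => f p.1 p.2)
    (β : ℝ) (hβ : 0 < β)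
    (μ₀ : Measure (EuclideanSpace ℝ (Fin n)))
    (μ : Measure (EuclideanSpace ℝ (Fin n) × EuclideanSpace ℝ (Fin m)))
    [IsFiniteMeasure μ₀] [IsFiniteMeasure μ]
    (hsupp₀ : msupport μ₀ ⊆ X) (hsupp : msupport μ ⊆ X ×ˢ U)
    (hLiouville : LiouvilleC f β μ₀ μ) :
    volume (msupport μ₀) ≤ volume (mciC X U f) := by
  exact measure_mono (msupport_initial_subset_mciC hX hU hf hβ hsupp hLiouville)
end

section
/- There is no duality gap between the discrete-time primal LP on measures and the discrete-time dual LP on functions: p* = d*, i.e., sup{ μ₀(X) : (μ₀, μ, μ̂₀) feasible for the primal LP } = inf{ ∫_X w dλ : (v, w) feasible for the dual LP }. -/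
open MeasureTheory

/-- The discrete-time discounted Liouville equation for the pair `(μ₀, μ)`. -/
def LiouvilleD {n m : ℕ}
    (f : EuclideanSpace ℝ (Fin n) → EuclideanSpace ℝ (Fin m) → EuclideanSpace ℝ (Fin n))
    (α : ℝ) (μ₀ : Measure (EuclideanSpace ℝ (Fin n)))
    (μ : Measure (EuclideanSpace ℝ (Fin n) × EuclideanSpace ℝ (Fin m))) : Prop :=
  ∀ v : EuclideanSpace ℝ (Fin n) → ℝ, Continuous v →
    ∫ p, v p.1 ∂μ = ∫ x, v x ∂μ₀ + α * ∫ p, v (f p.1 p.2) ∂μ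

/-- Feasibility of a triple `(μ₀, μ, μ̂₀)` for the discrete-time primal LP. -/
def FeasibleD {n m : ℕ} (X : Set (EuclideanSpace ℝ (Fin n)))
    (U : Set (EuclideanSpace ℝ (Fin m)))
    (f : EuclideanSpace ℝ (Fin n) → EuclideanSpace ℝ (Fin m) → EuclideanSpace ℝ (Fin n))
    (α : ℝ) (μ₀ : Measure (EuclideanSpace ℝ (Fin n)))
    (μ : Measure (EuclideanSpace ℝ (Fin n) × EuclideanSpace ℝ (Fin m)))
    (μh : Measure (EuclideanSpace ℝ (Fin n))) : Prop :=
  IsFiniteMeasure μ₀ ∧ IsFiniteMeasure μ ∧ IsFiniteMeasure μh ∧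
  msupport μ₀ ⊆ X ∧ msupport μh ⊆ X ∧ msupport μ ⊆ X ×ˢ U ∧
  LiouvilleD f α μ₀ μ ∧ μ₀ + μh = volume.restrict X

/-- Feasibility of a pair of continuous functions `(v, w)` for the discrete-time dual LP. -/
def DualFeasD {n m : ℕ} (X : Set (EuclideanSpace ℝ (Fin n)))
    (U : Set (EuclideanSpace ℝ (Fin m)))
    (f : EuclideanSpace ℝ (Fin n) → EuclideanSpace ℝ (Fin m) → EuclideanSpace ℝ (Fin n))
    (α : ℝ) (v w : EuclideanSpace ℝ (Fin n) → ℝ) : Prop :=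
  Continuous v ∧ Continuous w ∧
  (∀ x ∈ X, ∀ u ∈ U, α * v (f x u) ≤ v x) ∧
  (∀ x ∈ X, v x + 1 ≤ w x) ∧
  (∀ x ∈ X, 0 ≤ w x)

open Set Filter Topology
open scoped BoundedContinuousFunction ENNReal

theorem measure_compl_eq_zero_of_msupport_subset {E : Type*} [TopologicalSpace E]
    [SecondCountableTopology E] [MeasurableSpace E] {μ : Measure E} {K : Set E}
    (h : msupport μ ⊆ K) : μ Kᶜ = 0 := by
  refine measure_null_of_locally_null _ fun x hx => ?_
  have hx' : x ∉ msupport μ := fun h' => hx (h h')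
  simp only [msupport, mem_ofPred_eq, not_forall, not_lt, nonpos_iff_eq_zero] at hx'
  obtain ⟨s, hs, hxs, h0⟩ := hx'
  exact ⟨s, mem_nhdsWithin_of_mem_nhds (hs.mem_nhds hxs), h0⟩

theorem msupport_subset_of_measure_compl_eq_zero {E : Type*} [TopologicalSpace E]
    [MeasurableSpace E] {μ : Measure E} {K : Set E} (hK : IsClosed K) (h : μ Kᶜ = 0) :
    msupport μ ⊆ K := by
  intro x hx
  by_contra hxK
  exact (hx _ hK.isOpen_compl hxK).ne' h

/-- A continuous function is integrable against a finite measure carried by a set which the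
integrand maps into a compact set. -/
theorem integrable_comp_of_mapsTo_isCompact {Ω E : Type*} [MeasurableSpace Ω]
    [TopologicalSpace E] [MeasurableSpace E] [OpensMeasurableSpace E]
    {μ : Measure Ω} [IsFiniteMeasure μ] {S : Set Ω} {K : Set E} (hS : μ Sᶜ = 0) (hK : IsCompact K)
    {g : Ω → E} (hg : Measurable g) (hgS : MapsTo g S K) {v : E → ℝ} (hv : Continuous v) :
    Integrable (fun x => v (g x)) μ := by
  obtain ⟨C, hC⟩ := hK.exists_bound_of_continuousOn hv.continuousOn
  refine Integrable.of_bound (hv.measurable.comp hg).aestronglyMeasurable C ?_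
  filter_upwards [measure_eq_zero_iff_ae_notMem.1 hS] with x hx
  exact hC _ (hgS (not_not.1 hx))

/-- A compact relation admits a Borel section over its domain. -/
theorem IsCompact.exists_measurable_section {E F : Type*} [MetricSpace E] [MeasurableSpace E]
    [BorelSpace E] [MetricSpace F] [MeasurableSpace F] [BorelSpace F] [Nonempty F]
    {K : Set (E × F)} (hK : IsCompact K) :
    ∃ g : E → F, Measurable g ∧ ∀ p ∈ K, (p.1, g p.1) ∈ K := by
  rcases K.eq_empty_or_nonempty with rfl | hne
  · exact ⟨fun _ => Classical.arbitrary F, measurable_const, by simp⟩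
  have : Nonempty K := hne.to_subtype
  have : CompactSpace K := isCompact_iff_compactSpace.1 hK
  obtain ⟨φ₀, hφ₀, hφ₀s⟩ := exists_nat_bool_continuous_surjective_of_compact K
  let φ : cantorSet → K := φ₀ ∘ cantorSetHomeomorphNatToBool
  have hφ : Continuous φ := hφ₀.comp cantorSetHomeomorphNatToBool.continuous
  have hφs : Function.Surjective φ := hφ₀s.comp cantorSetHomeomorphNatToBool.surjective
  have hCS : CompactSpace cantorSet := isCompact_iff_compactSpace.1 isCompact_cantorSet
  let A : E → Set ℝ := fun x => (↑) '' {t : cantorSet | (φ t : E × F).1 = x}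
  have hAc : ∀ x, IsCompact (A x) := fun x =>
    (isClosed_eq (by fun_prop) continuous_const).isCompact.image continuous_subtype_val
  have hA0 : ∀ x, A x ⊆ Icc 0 1 := by
    rintro x _ ⟨t, -, rfl⟩
    exact cantorSet_subset_unitInterval t.2
  have hAne : ∀ x, (A x).Nonempty ↔ x ∈ Prod.fst '' K := by
    intro x
    constructor
    · rintro ⟨_, t, ht, rfl⟩
      exact ⟨φ t, (φ t).2, ht⟩
    · rintro ⟨p, hp, rfl⟩
      obtain ⟨t, ht⟩ := hφs ⟨p, hp⟩
      exact ⟨t, t, by simp [ht], rfl⟩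
  have hfstK : MeasurableSet (Prod.fst '' K) := (hK.image continuous_fst).measurableSet
  have hm : Measurable fun x => sInf (A x) := by
    refine measurable_of_Iic fun c => ?_
    let B : Set E := (fun t : cantorSet => (φ t : E × F).1) '' {t | (t : ℝ) ≤ c}
    have hB : MeasurableSet B :=
      ((isClosed_le continuous_subtype_val continuous_const).isCompact.image
        (by fun_prop)).measurableSet
    have hEq : (fun x => sInf (A x)) ⁻¹' Iic c =
        B ∪ ((Prod.fst '' K)ᶜ ∩ {_x | (0 : ℝ) ≤ c}) := by
      ext x
      simp only [mem_preimage, mem_Iic, mem_union, mem_inter_iff, mem_compl_iff, ← hAne,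
        mem_ofPred_eq]
      constructor
      · intro h
        by_cases hx : (A x).Nonempty
        · obtain ⟨t, ht, hts⟩ := (hAc x).sInf_mem hx
          exact Or.inl ⟨t, by simpa [hts] using h, ht⟩
        · rw [not_nonempty_iff_eq_empty.1 hx, Real.sInf_empty] at h
          exact Or.inr ⟨hx, h⟩
      · rintro (⟨t, htc, rfl⟩ | ⟨hx, hc⟩)
        · exact (csInf_le ⟨0, fun s hs => (hA0 _ hs).1⟩ ⟨t, rfl, rfl⟩).trans htc
        · rwa [not_nonempty_iff_eq_empty.1 hx, Real.sInf_empty]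
    rw [hEq]
    exact hB.union (hfstK.compl.inter (MeasurableSet.const _))
  obtain ⟨ψ, hψ, hψφ⟩ :=
    (MeasurableEmbedding.subtype_coe
      isClosed_cantorSet.measurableSet).exists_measurable_extend
      (g := fun t => (φ t : E × F).2) (Continuous.measurable (by fun_prop)) fun _ => ‹_›
  refine ⟨fun x => ψ (sInf (A x)), hψ.comp hm, fun p hp => ?_⟩
  obtain ⟨t, ht, hts⟩ := (hAc p.1).sInf_mem ((hAne _).2 ⟨p, hp, rfl⟩)
  have h2 : ψ t = (φ t : E × F).2 := congrFun hψφ t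
  have h1 : (φ t : E × F).1 = p.1 := ht
  have h3 : (p.1, ψ (sInf (A p.1))) = (φ t : E × F) := by
    rw [← hts, h2, ← h1]
  exact h3 ▸ (φ t).2

/-- The discounted occupation measure of a dynamical system leaving `S` invariant. -/
theorem exists_discounted_occupation_measure {E : Type*} [MeasurableSpace E] {F : E → E}
    (hF : Measurable F) {S : Set E} (hS : MeasurableSet S) (hFS : MapsTo F S S) (μ₀ : Measure E)
    [IsFiniteMeasure μ₀] (h₀ : μ₀ Sᶜ = 0) {a : ℝ≥0∞} (ha : a < 1) :
    ∃ ν : Measure E, IsFiniteMeasure ν ∧ ν Sᶜ = 0 ∧ ν = μ₀ + a • ν.map F := by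
  have hFn : ∀ k, Measurable F^[k] := fun k => hF.iterate k
  refine ⟨Measure.sum fun k => a ^ k • μ₀.map F^[k], ⟨?_⟩, ?_, ?_⟩
  · rw [Measure.sum_apply _ MeasurableSet.univ]
    simp only [Measure.smul_apply, smul_eq_mul, Measure.map_apply (hFn _) MeasurableSet.univ,
      preimage_univ, ENNReal.tsum_mul_right, ENNReal.tsum_geometric]
    refine ENNReal.mul_lt_top ?_ (measure_lt_top _ _)
    simpa using ha
  · rw [Measure.sum_apply _ hS.compl]
    refine ENNReal.tsum_eq_zero.2 fun k => ?_
    rw [Measure.smul_apply, Measure.map_apply (hFn k) hS.compl]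
    have : (F^[k]) ⁻¹' Sᶜ ⊆ Sᶜ := fun x hx hxS => hx (hFS.iterate k hxS)
    rw [measure_mono_null this h₀, smul_zero]
  · ext s hs
    rw [Measure.map_sum hF.aemeasurable]
    simp only [Measure.add_apply, Measure.smul_apply, Measure.sum_apply _ hs, Measure.map_smul,
      Measure.map_map hF (hFn _), smul_eq_mul, ← ENNReal.tsum_mul_left]
    rw [tsum_eq_zero_add' ENNReal.summable]
    simp only [pow_zero, Function.iterate_zero, Measure.map_id, one_mul, ← mul_assoc,
      ← pow_succ', ← Function.iterate_succ']

/-- The value function of a discounted control problem with running cost `h`. -/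
theorem exists_discounted_value_function {E F : Type*} [TopologicalSpace E] [TopologicalSpace F]
    {U : Set F} (hU : IsCompact U) (hUne : U.Nonempty) {f : E → F → E}
    (hf : Continuous fun p : E × F => f p.1 p.2) {α : ℝ} (hα0 : 0 ≤ α) (hα1 : α < 1)
    (h : E →ᵇ ℝ) (hh : ∀ x, 0 ≤ h x) :
    ∃ V : E → ℝ, Continuous V ∧ (∀ x, V x ≤ 0) ∧
      ∀ x, V x = -h x + α * sSup ((fun u => V (f x u)) '' U) := by
  have hmax : ∀ (V : E →ᵇ ℝ) (x : E), ∃ u ∈ U, sSup ((fun u => V (f x u)) '' U) = V (f x u) :=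
    fun V x => hU.exists_sSup_image_eq hUne
      (V.continuous.comp (hf.comp (Continuous.prodMk_right x))).continuousOn
  have hle : ∀ (V : E →ᵇ ℝ) (x : E), ∀ u ∈ U, V (f x u) ≤ sSup ((fun u => V (f x u)) '' U) :=
    fun V x u hu => le_csSup (hU.image
      (V.continuous.comp (hf.comp (Continuous.prodMk_right x)))).bddAbove ⟨u, hu, rfl⟩
  have hcont : ∀ V : E →ᵇ ℝ, Continuous fun x => sSup ((fun u => V (f x u)) '' U) :=
    fun V => hU.continuous_sSup (f := fun x u => V (f x u)) (V.continuous.comp hf)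
  let T : (E →ᵇ ℝ) → (E →ᵇ ℝ) := fun V =>
    BoundedContinuousFunction.ofNormedAddCommGroup
      (fun x => -h x + α * sSup ((fun u => V (f x u)) '' U))
      (h.continuous.neg.add (continuous_const.mul (hcont V))) (‖h‖ + α * ‖V‖) (by
        intro x
        obtain ⟨u, -, hu⟩ := hmax V x
        rw [hu]
        refine (norm_add_le _ _).trans (add_le_add ?_ ?_)
        · rw [norm_neg]; exact h.norm_coe_le_norm x
        · rw [norm_mul, Real.norm_of_nonneg hα0]
          exact mul_le_mul_of_nonneg_left (V.norm_coe_le_norm _) hα0)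
  have hT : ∀ V x, T V x = -h x + α * sSup ((fun u => V (f x u)) '' U) := fun _ _ => rfl
  have hone : ∀ (V W : E →ᵇ ℝ) (x : E), T V x - T W x ≤ α * dist V W := by
    intro V W x
    obtain ⟨u, hu, hVu⟩ := hmax V x
    have h1 := hle W x u hu
    have h2 : V (f x u) - W (f x u) ≤ dist V W :=
      (le_abs_self _).trans (V.dist_coe_le_dist (g := W) (f x u))
    rw [hT, hT, hVu]
    nlinarith
  have hc : ContractingWith ⟨α, hα0⟩ T := by
    refine ⟨by exact_mod_cast hα1, LipschitzWith.of_dist_le_mul fun V W => ?_⟩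
    refine (BoundedContinuousFunction.dist_le (by positivity)).2 fun x => ?_
    rw [Real.dist_eq, abs_le]
    have h1 := hone V W x
    have h2 := hone W V x
    rw [dist_comm] at h2
    change -(α * dist V W) ≤ _ ∧ _ ≤ α * dist V W
    constructor <;> linarith
  obtain ⟨V, hV⟩ : ∃ V, T V = V := ⟨_, hc.fixedPoint_isFixedPt⟩
  have hVx : ∀ x, V x = -h x + α * sSup ((fun u => V (f x u)) '' U) := fun x => by
    rw [← hT, hV]
  refine ⟨V, V.continuous, fun x => ?_, hVx⟩
  have hiter : ∀ (k : ℕ) (x : E), V x ≤ α ^ k * ‖V‖ := by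
    intro k
    induction k with
    | zero => intro x; simpa using (le_abs_self _).trans (V.norm_coe_le_norm x)
    | succ k ih =>
      intro x
      obtain ⟨u, -, hu⟩ := hmax V x
      rw [hVx, hu, pow_succ', mul_assoc]
      linarith [hh x, mul_le_mul_of_nonneg_left (ih (f x u)) hα0]
  have hlim : Tendsto (fun k : ℕ => α ^ k * ‖V‖) atTop (𝓝 (0 * ‖V‖)) :=
    (tendsto_pow_atTop_nhds_zero_of_lt_one hα0 hα1).mul_const _
  rw [zero_mul] at hlim
  exact ge_of_tendsto' hlim fun k => hiter k x

/-- Any compact set carrying an admissible feedback yields a feasible point for the primal. -/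
theorem exists_feasibleD_of_viable {n m : ℕ} {X S : Set (EuclideanSpace ℝ (Fin n))}
    {U : Set (EuclideanSpace ℝ (Fin m))} (hX : IsCompact X) (hU : IsCompact U)
    {f : EuclideanSpace ℝ (Fin n) → EuclideanSpace ℝ (Fin m) → EuclideanSpace ℝ (Fin n)}
    (hf : Continuous fun p : EuclideanSpace ℝ (Fin n) × EuclideanSpace ℝ (Fin m) => f p.1 p.2)
    {α : ℝ} (hα0 : 0 < α) (hα1 : α < 1) (hS : IsCompact S) (hSX : S ⊆ X)
    (hv : ∀ x ∈ S, ∃ u ∈ U, f x u ∈ S) :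
    ∃ μ₀ μ μh, FeasibleD X U f α μ₀ μ μh ∧ (volume S).toReal = (μ₀ X).toReal := by
  have hK : IsCompact ((S ×ˢ U) ∩ (fun p : EuclideanSpace ℝ (Fin n) × EuclideanSpace ℝ (Fin m) =>
      f p.1 p.2) ⁻¹' S) := (hS.prod hU).inter_right (hS.isClosed.preimage hf)
  obtain ⟨g, hg, hgK⟩ := hK.exists_measurable_section
  have hgS : ∀ x ∈ S, g x ∈ U ∧ f x (g x) ∈ S := by
    intro x hx
    obtain ⟨u, hu, hfu⟩ := hv x hx
    have := hgK (x, u) ⟨⟨hx, hu⟩, hfu⟩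
    exact ⟨this.1.2, this.2⟩
  have hG : Measurable fun x => (x, g x) := measurable_id.prodMk hg
  have hF : Measurable fun x => f x (g x) := hf.measurable.comp hG
  have hXv : volume X < ⊤ := hX.measure_lt_top
  have hSv : volume S < ⊤ := hS.measure_lt_top
  have : IsFiniteMeasure (volume.restrict S) := ⟨by simpa using hSv⟩
  have hXm := hX.isClosed.measurableSet
  have hSm := hS.isClosed.measurableSet
  have hS0 : (volume.restrict S) Sᶜ = 0 := by simp [Measure.restrict_apply hSm.compl]
  obtain ⟨ν, hνf, hνS, hν⟩ := exists_discounted_occupation_measure hF hSm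
    (fun x hx => (hgS x hx).2) (volume.restrict S) hS0
    (ENNReal.ofReal_lt_one.2 hα1)
  refine ⟨volume.restrict S, ν.map fun x => (x, g x), volume.restrict (X \ S),
    ⟨inferInstance, Measure.isFiniteMeasure_map _ _,
      ⟨by simpa using (measure_mono sdiff_subset).trans_lt hXv⟩, ?_, ?_, ?_, ?_, ?_⟩, ?_⟩
  · exact (msupport_subset_of_measure_compl_eq_zero hS.isClosed hS0).trans hSX
  · refine msupport_subset_of_measure_compl_eq_zero hX.isClosed ?_
    rw [Measure.restrict_apply hXm.compl]
    refine measure_mono_null ?_ (measure_empty (μ := volume))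
    rintro x ⟨hx, hx', -⟩
    exact hx hx'
  · refine msupport_subset_of_measure_compl_eq_zero (hX.prod hU).isClosed ?_
    rw [Measure.map_apply hG (hX.prod hU).isClosed.measurableSet.compl]
    exact measure_mono_null (fun x hx hxS => hx ⟨hSX hxS, (hgS x hxS).1⟩) hνS
  · intro v hvc
    have hi1 : Integrable (fun x => v x) (volume.restrict S) :=
      integrable_comp_of_mapsTo_isCompact hS0 hS measurable_id (mapsTo_id S) hvc
    have hi2 : Integrable (fun x => v (f x (g x))) ν :=
      integrable_comp_of_mapsTo_isCompact hνS hS hF (fun x hx => (hgS x hx).2) hvc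
    have hi3 : Integrable v (ν.map fun x => f x (g x)) :=
      (integrable_map_measure hvc.aestronglyMeasurable hF.aemeasurable).2 hi2
    rw [integral_map (f := fun p => v p.1) hG.aemeasurable
        (hvc.comp continuous_fst).aestronglyMeasurable,
      integral_map (f := fun p => v (f p.1 p.2)) hG.aemeasurable
        (hvc.comp hf).aestronglyMeasurable]
    conv_lhs => rw [hν]
    rw [integral_add_measure hi1 (hi3.smul_measure ENNReal.ofReal_ne_top), integral_smul_measure,
      integral_map hF.aemeasurable hvc.aestronglyMeasurable, ENNReal.toReal_ofReal hα0.le,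
      smul_eq_mul]
  · have := Measure.restrict_inter_add_sdiff (μ := volume) X hSm
    rwa [inter_eq_right.2 hSX] at this
  · rw [Measure.restrict_apply hXm, inter_eq_right.2 hSX]

theorem FeasibleD.toReal_measure_le_integral {n m : ℕ} {X : Set (EuclideanSpace ℝ (Fin n))}
    {U : Set (EuclideanSpace ℝ (Fin m))} (hX : IsCompact X) (hU : IsCompact U)
    {f : EuclideanSpace ℝ (Fin n) → EuclideanSpace ℝ (Fin m) → EuclideanSpace ℝ (Fin n)}
    (hf : Continuous fun p : EuclideanSpace ℝ (Fin n) × EuclideanSpace ℝ (Fin m) => f p.1 p.2)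
    {α : ℝ} {μ₀ μ μh} (hp : FeasibleD X U f α μ₀ μ μh) {v w} (hd : DualFeasD X U f α v w) :
    (μ₀ X).toReal ≤ ∫ x in X, w x := by
  obtain ⟨h₀, hμ, hh, hs₀, hsh, hs, hL, hadd⟩ := hp
  obtain ⟨hv, hw, hvf, hvw, hw0⟩ := hd
  have hn₀ := measure_compl_eq_zero_of_msupport_subset hs₀
  have hnh := measure_compl_eq_zero_of_msupport_subset hsh
  have hn := measure_compl_eq_zero_of_msupport_subset hs
  have ae₀ : ∀ᵐ x ∂μ₀, x ∈ X := hn₀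
  have aeh : ∀ᵐ x ∂μh, x ∈ X := hnh
  have ae : ∀ᵐ x ∂μ, x ∈ X ×ˢ U := hn
  have hiv : Integrable v μ₀ :=
    integrable_comp_of_mapsTo_isCompact hn₀ hX measurable_id (mapsTo_id X) hv
  have hiw : Integrable w μ₀ :=
    integrable_comp_of_mapsTo_isCompact hn₀ hX measurable_id (mapsTo_id X) hw
  have hiwh : Integrable w μh :=
    integrable_comp_of_mapsTo_isCompact hnh hX measurable_id (mapsTo_id X) hw
  have hi1 : Integrable (fun p => v p.1) μ :=
    integrable_comp_of_mapsTo_isCompact hn (hX.prod hU) measurable_id (mapsTo_id _)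
      (hv.comp continuous_fst)
  have hi2 : Integrable (fun p => v (f p.1 p.2)) μ :=
    integrable_comp_of_mapsTo_isCompact hn (hX.prod hU) measurable_id (mapsTo_id _)
      (hv.comp hf)
  have h1 : α * ∫ p, v (f p.1 p.2) ∂μ ≤ ∫ p, v p.1 ∂μ := by
    rw [← integral_const_mul]
    refine integral_mono_ae (hi2.const_mul α) hi1 ?_
    filter_upwards [ae] with p hp
    exact hvf _ hp.1 _ hp.2
  have h2 : ∫ x, (v x + 1) ∂μ₀ ≤ ∫ x, w x ∂μ₀ := by
    refine integral_mono_ae (hiv.add (integrable_const 1)) hiw ?_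
    filter_upwards [ae₀] with x hx using hvw x hx
  rw [integral_add hiv (integrable_const 1), integral_const, smul_eq_mul, mul_one] at h2
  have h3 : 0 ≤ ∫ x, w x ∂μh := by
    refine integral_nonneg_of_ae ?_
    filter_upwards [aeh] with x hx using hw0 x hx
  have h4 : (μ₀ X).toReal ≤ μ₀.real univ := measureReal_mono (subset_univ X)
  rw [← hadd, integral_add_measure hiw hiwh]
  have := hL v hv
  linarith

/-- If `S` is the zero set in `X` of a nonpositive continuous `V` satisfying the Bellman
inequality, then the multiples of `V` give dual feasible pairs with values tending to the volume
of `S`. -/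
theorem exists_tendsto_dualFeasD {n m : ℕ} {X : Set (EuclideanSpace ℝ (Fin n))}
    {U : Set (EuclideanSpace ℝ (Fin m))} (hX : IsCompact X)
    {f : EuclideanSpace ℝ (Fin n) → EuclideanSpace ℝ (Fin m) → EuclideanSpace ℝ (Fin n)}
    {α : ℝ} {V : EuclideanSpace ℝ (Fin n) → ℝ} (hV : Continuous V) (hV0 : ∀ x, V x ≤ 0)
    (hVf : ∀ x ∈ X, ∀ u ∈ U, α * V (f x u) ≤ V x) :
    ∃ v w : ℕ → EuclideanSpace ℝ (Fin n) → ℝ, (∀ k, DualFeasD X U f α (v k) (w k)) ∧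
      Tendsto (fun k => ∫ x in X, w k x) atTop (𝓝 (volume (X ∩ {x | V x = 0})).toReal) := by
  refine ⟨fun k x => k * V x, fun k x => max (k * V x + 1) 0, fun k => ⟨by fun_prop, by fun_prop,
    fun x hx u hu => ?_, fun x _ => le_max_left _ _, fun x _ => le_max_right _ _⟩, ?_⟩
  · have := mul_le_mul_of_nonneg_left (hVf x hx u hu) k.cast_nonneg
    linarith
  have hZ : MeasurableSet {x | V x = 0} := (isClosed_eq hV continuous_const).measurableSet
  have hXv : volume X < ⊤ := hX.measure_lt_top
  have : IsFiniteMeasure (volume.restrict X) := ⟨by simpa using hXv⟩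
  have hI : ∫ x in X, {x | V x = 0}.indicator (fun _ => (1 : ℝ)) x =
      (volume (X ∩ {x | V x = 0})).toReal := by
    rw [integral_indicator hZ, setIntegral_const, smul_eq_mul, mul_one, measureReal_def,
      Measure.restrict_apply hZ, inter_comm]
  rw [← hI]
  refine tendsto_integral_of_dominated_convergence (fun _ => 1)
    (fun k => Continuous.aestronglyMeasurable (by fun_prop)) (integrable_const 1)
    (fun k => Eventually.of_forall fun x => ?_) (Eventually.of_forall fun x => ?_)
  · rw [Real.norm_of_nonneg (le_max_right _ _)]
    have := mul_nonpos_of_nonneg_of_nonpos k.cast_nonneg (hV0 x)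
    exact max_le (by linarith) zero_le_one
  · by_cases hx : V x = 0
    · simp [hx]
    · have hneg : V x < 0 := lt_of_le_of_ne (hV0 x) hx
      rw [indicator_of_notMem (by simpa using hx)]
      refine tendsto_const_nhds.congr' ?_
      have ht : Tendsto (fun k : ℕ => (k : ℝ) * V x + 1) atTop atBot :=
        tendsto_atBot_add_const_right _ _ (tendsto_natCast_atTop_atTop.atTop_mul_const_of_neg hneg)
      filter_upwards [ht.eventually_le_atBot 0] with k hk
      exact (max_eq_right hk).symm

theorem exists_viable_set_and_dualFeasD {n m : ℕ} {X : Set (EuclideanSpace ℝ (Fin n))}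
    {U : Set (EuclideanSpace ℝ (Fin m))} (hX : IsCompact X) (hU : IsCompact U)
    {f : EuclideanSpace ℝ (Fin n) → EuclideanSpace ℝ (Fin m) → EuclideanSpace ℝ (Fin n)}
    (hf : Continuous fun p : EuclideanSpace ℝ (Fin n) × EuclideanSpace ℝ (Fin m) => f p.1 p.2)
    {α : ℝ} (hα0 : 0 < α) (hα1 : α < 1) :
    ∃ S ⊆ X, IsCompact S ∧ (∀ x ∈ S, ∃ u ∈ U, f x u ∈ S) ∧
      ∃ v w : ℕ → EuclideanSpace ℝ (Fin n) → ℝ, (∀ k, DualFeasD X U f α (v k) (w k)) ∧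
        Tendsto (fun k => ∫ x in X, w k x) atTop (𝓝 (volume S).toReal) := by
  rcases U.eq_empty_or_nonempty with rfl | hUne
  · obtain ⟨v, w, hvw, ht⟩ := exists_tendsto_dualFeasD (f := f) (α := α) (U := ∅) hX
      (V := fun _ => -1) continuous_const (by norm_num) (by simp)
    exact ⟨∅, empty_subset _, isCompact_empty, by simp, v, w, hvw, by simpa using ht⟩
  let h : EuclideanSpace ℝ (Fin n) →ᵇ ℝ := BoundedContinuousFunction.ofNormedAddCommGroup
    (fun x => min 1 (Metric.infDist x X))
    (continuous_const.min (Metric.continuous_infDist_pt X)) 1 (fun x => by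
      rw [Real.norm_of_nonneg (le_min zero_le_one Metric.infDist_nonneg)]
      exact min_le_left _ _)
  have hh : ∀ x, h x = min 1 (Metric.infDist x X) := fun _ => rfl
  have hh0 : ∀ x, 0 ≤ h x := fun x => le_min zero_le_one Metric.infDist_nonneg
  obtain ⟨V, hV, hV0, hVx⟩ := exists_discounted_value_function hU hUne hf hα0.le hα1 h hh0
  have hVc : ∀ x, Continuous fun u => V (f x u) :=
    fun x => hV.comp (hf.comp (Continuous.prodMk_right x))
  have hhX : ∀ x ∈ X, h x = 0 := fun x hx => by
    rw [hh, Metric.infDist_zero_of_mem hx, min_eq_right zero_le_one]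
  refine ⟨X ∩ {x | V x = 0}, inter_subset_left,
    hX.inter_right (isClosed_eq hV continuous_const), ?_,
    exists_tendsto_dualFeasD hX hV hV0 fun x hx u hu => ?_⟩
  · rintro x ⟨hx, hx0⟩
    obtain ⟨u, hu, hmax⟩ := hU.exists_sSup_image_eq hUne (hVc x).continuousOn
    have hzero : V (f x u) = 0 := by
      have h1 := hVx x
      rw [hx0, hhX x hx, hmax, neg_zero, zero_add] at h1
      exact (mul_eq_zero.1 h1.symm).resolve_left hα0.ne'
    refine ⟨u, hu, ?_, hzero⟩
    obtain ⟨u', -, hmax'⟩ := hU.exists_sSup_image_eq hUne (hVc (f x u)).continuousOn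
    have h2 := hVx (f x u)
    rw [hzero, hmax'] at h2
    have h3 := mul_nonpos_of_nonneg_of_nonpos hα0.le (hV0 (f (f x u) u'))
    have h4 : min 1 (Metric.infDist (f x u) X) ≤ 0 := by rw [← hh]; linarith
    refine (hX.isClosed.mem_iff_infDist_zero ⟨x, hx⟩).2
      (le_antisymm ?_ Metric.infDist_nonneg)
    exact (min_le_iff.1 h4).resolve_left (by norm_num)
  · rw [hVx x, hhX x hx, neg_zero, zero_add]
    exact mul_le_mul_of_nonneg_left (le_csSup (hU.image (hVc x)).bddAbove ⟨u, hu, rfl⟩) hα0.le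

theorem discrete_no_duality_gap {n m : ℕ}
    (X : Set (EuclideanSpace ℝ (Fin n))) (U : Set (EuclideanSpace ℝ (Fin m)))
    (hX : IsCompact X) (hU : IsCompact U)
    (f : EuclideanSpace ℝ (Fin n) → EuclideanSpace ℝ (Fin m) → EuclideanSpace ℝ (Fin n))
    (hf : Continuous fun p : EuclideanSpace ℝ (Fin n) × EuclideanSpace ℝ (Fin m) => f p.1 p.2)
    (α : ℝ) (hα0 : 0 < α) (hα1 : α < 1) :
    sSup {r : ℝ | ∃ μ₀ μ μh, FeasibleD X U f α μ₀ μ μh ∧ r = (μ₀ X).toReal}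
      = sInf {r : ℝ | ∃ v w, DualFeasD X U f α v w ∧ r = ∫ x in X, w x ∂volume} := by
  obtain ⟨S, hSX, hS, hvia, v, w, hvw, ht⟩ :=
    exists_viable_set_and_dualFeasD hX hU hf hα0 hα1
  obtain ⟨μ₀, μ, μh, hμ, hμS⟩ := exists_feasibleD_of_viable hX hU hf hα0 hα1 hS hSX hvia
  have hP : IsGreatest {r : ℝ | ∃ μ₀ μ μh, FeasibleD X U f α μ₀ μ μh ∧ r = (μ₀ X).toReal}
      (volume S).toReal := by
    refine ⟨⟨μ₀, μ, μh, hμ, hμS⟩, ?_⟩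
    rintro _ ⟨μ₀', μ', μh', hμ', rfl⟩
    exact ge_of_tendsto' ht fun k => hμ'.toReal_measure_le_integral hX hU hf (hvw k)
  have hD : IsGLB {r : ℝ | ∃ v w, DualFeasD X U f α v w ∧ r = ∫ x in X, w x ∂volume}
      (volume S).toReal := by
    refine ⟨?_, fun b hb => ge_of_tendsto' ht fun k => hb ⟨v k, w k, hvw k, rfl⟩⟩
    rintro _ ⟨v', w', hvw', rfl⟩
    exact hμS.trans_le (hμ.toReal_measure_le_integral hX hU hf hvw')
  rw [hP.csSup_eq, hD.csInf_eq ⟨_, v 0, w 0, hvw 0, rfl⟩]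
end

section
/- Let x₀ ∈ X, let x : [0,∞) → X be locally absolutely continuous with x(0) = x₀, and let (ν_t)_{t≥0} be a family of Borel probability measures on U, measurable in t, such that ẋ(t) = ∫_U f(x(t), u) dν_t(u) for almost every t ≥ 0. Define a measure μ on ℝⁿ × ℝᵐ by μ(A × B) := ∫_0^∞ e^{−βt} 1_A(x(t)) ν_t(B) dt. Then μ is a finite nonnegative Borel measure supported in X × U with total mass μ(X × U) = 1/β, and the pair (δ_{x₀}, μ) satisfies the continuous-time discounted Liouville equation. -/
open MeasureTheory
open scoped ENNReal

open ProbabilityTheory in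
/-- The discounted occupation measure of a curve `y` and a relaxed control `κ`. -/
noncomputable def discountedOccupation {E F : Type*} [MeasurableSpace E] [MeasurableSpace F]
    (β : ℝ) (y : ℝ → E) (κ : Kernel ℝ F) : Measure (E × F) :=
  (((volume.restrict (Set.Ioi (0:ℝ))).withDensity
    fun t => ENNReal.ofReal (Real.exp (-β * t))) ⊗ₘ κ).map fun p => (y p.1, p.2)

lemma msupport_eq_support {α : Type*} [TopologicalSpace α] [MeasurableSpace α] (μ : Measure α) :
    msupport μ = μ.support := by
  rw [Measure.support_eq_forall_isOpen]
  ext x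
  exact forall_congr' fun s => ⟨fun h h₁ h₂ => h h₂ h₁, fun h h₁ h₂ => h h₂ h₁⟩

lemma ae_mem_of_msupport_subset {α : Type*} [TopologicalSpace α] [HereditarilyLindelofSpace α]
    [MeasurableSpace α] {μ : Measure α} {U : Set α} (h : msupport μ ⊆ U) : ∀ᵐ u ∂μ, u ∈ U := by
  rw [msupport_eq_support] at h
  exact Filter.mem_of_superset Measure.support_mem_ae h

lemma IsCompact.integrable_of_continuous_of_ae_mem {α G : Type*} [TopologicalSpace α]
    [MeasurableSpace α] [OpensMeasurableSpace α] [NormedAddCommGroup G]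
    [SecondCountableTopology G]
    {μ : Measure α} [IsFiniteMeasure μ] {K : Set α} (hK : IsCompact K) {g : α → G}
    (hg : Continuous g) (hμ : ∀ᵐ p ∂μ, p ∈ K) : Integrable g μ := by
  borelize G
  obtain ⟨C, hC⟩ := hK.exists_bound_of_continuousOn hg.continuousOn
  exact Integrable.of_bound hg.measurable.aestronglyMeasurable C (hμ.mono hC)

lemma lintegral_exp_neg_mul_Ioi {β : ℝ} (hβ : 0 < β) :
    ∫⁻ t in Set.Ioi (0:ℝ), ENNReal.ofReal (Real.exp (-β * t)) = ENNReal.ofReal (1 / β) := by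
  rw [← ofReal_integral_eq_lintegral_ofReal (integrableOn_exp_mul_Ioi (by linarith) 0)
    (Filter.Eventually.of_forall fun t => (Real.exp_pos _).le),
    integral_exp_mul_Ioi (by linarith) 0]
  simp

section discountedOccupation

open ProbabilityTheory

variable {E F : Type*} [MeasurableSpace E] [MeasurableSpace F] {β : ℝ} {y : ℝ → E}
  {κ : Kernel ℝ F}

lemma discountedOccupation_prod [IsMarkovKernel κ] (hy : Measurable y) {A : Set E} {B : Set F}
    (hA : MeasurableSet A) (hB : MeasurableSet B) :
    discountedOccupation β y κ (A ×ˢ B) = ∫⁻ t in Set.Ioi (0:ℝ),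
      ENNReal.ofReal (Real.exp (-β * t)) * A.indicator (fun _ => (1:ℝ≥0∞)) (y t) * κ t B := by
  have hpre : (fun p : ℝ × F => (y p.1, p.2)) ⁻¹' (A ×ˢ B) = (y ⁻¹' A) ×ˢ B := rfl
  rw [discountedOccupation, Measure.map_apply (by fun_prop) (hA.prod hB), hpre,
    Measure.compProd_apply_prod (hy hA) hB, ← lintegral_indicator (hy hA),
    lintegral_withDensity_eq_lintegral_mul _ (by fun_prop)
      ((κ.measurable_coe hB).indicator (hy hA))]
  refine lintegral_congr fun t => ?_
  by_cases ht : y t ∈ A <;> simp [Set.indicator, ht]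

lemma integral_discountedOccupation [IsMarkovKernel κ] (hy : Measurable y)
    {g : E × F → ℝ} (hgm : StronglyMeasurable g)
    (hg : Integrable g (discountedOccupation β y κ)) :
    IntegrableOn (fun t => Real.exp (-β * t) * ∫ u, g (y t, u) ∂κ t) (Set.Ioi 0) ∧
    ∫ p, g p ∂discountedOccupation β y κ =
      ∫ t in Set.Ioi (0:ℝ), Real.exp (-β * t) * ∫ u, g (y t, u) ∂κ t := by
  have hmap : Measurable fun p : ℝ × F => (y p.1, p.2) := by fun_prop
  have hw : Measurable fun t : ℝ => ENNReal.ofReal (Real.exp (-β * t)) := by fun_prop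
  have hlt : ∀ᵐ t ∂(volume.restrict (Set.Ioi (0:ℝ))),
      ENNReal.ofReal (Real.exp (-β * t)) < ∞ := by simp
  rw [discountedOccupation, integrable_map_measure hgm.aestronglyMeasurable hmap.aemeasurable] at hg
  constructor
  · have := hg.integral_compProd
    simp only [Kernel.const_apply, Kernel.prodMkLeft_apply] at this
    rw [integrable_withDensity_iff_integrable_smul' hw hlt] at this
    simpa [IntegrableOn, ENNReal.toReal_ofReal (Real.exp_pos _).le] using this
  · rw [discountedOccupation, integral_map hmap.aemeasurable hgm.aestronglyMeasurable]
    refine (Measure.integral_compProd hg).trans ?_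
    rw [integral_withDensity_eq_integral_toReal_smul hw hlt]
    simp [ENNReal.toReal_ofReal (Real.exp_pos _).le]

end discountedOccupation

/-- The fundamental theorem of calculus for a `C¹` function along a Lipschitz curve. -/
lemma ContDiff.integral_eq_sub_of_comp_lipschitzOnWith {E : Type*} [NormedAddCommGroup E]
    [NormedSpace ℝ E] {ψ : E → ℝ} (hψ : ContDiff ℝ 1 ψ) {z : ℝ → E} {C : NNReal} {a b : ℝ}
    (hz : LipschitzOnWith C z (Set.uIcc a b)) {w : ℝ → ℝ}
    (hw : ∀ᵐ t, t ∈ Set.uIcc a b → HasDerivAt (fun t => ψ (z t)) (w t) t) :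
    ∫ t in a..b, w t = ψ (z b) - ψ (z a) := by
  obtain ⟨K, hK⟩ := (hψ.locallyLipschitz.locallyLipschitzOn
    (s := z '' Set.uIcc a b)).exists_lipschitzOnWith_of_compact
    (isCompact_uIcc.image_of_continuousOn hz.continuousOn)
  have hac := (hK.comp hz (Set.mapsTo_image z _)).absolutelyContinuousOnInterval
  refine Eq.trans ?_ hac.integral_deriv_eq_sub
  refine intervalIntegral.integral_congr_ae ?_
  filter_upwards [hw] with t ht hmem
  exact (ht (Set.uIoc_subset_uIcc hmem)).deriv.symm

/-- A curve which is the primitive of a bounded function is Lipschitz. -/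
lemma lipschitzOnWith_of_eq_integral {E : Type*} [NormedAddCommGroup E] [NormedSpace ℝ E]
    {x d : ℝ → E} {C : NNReal} (hInt : ∀ t, 0 ≤ t → IntervalIntegrable d volume 0 t)
    (hAC : ∀ t, 0 ≤ t → x t = x 0 + ∫ s in (0:ℝ)..t, d s)
    (hd : ∀ᵐ t, 0 ≤ t → ‖d t‖ ≤ C) : LipschitzOnWith C x (Set.Ici 0) := by
  refine LipschitzOnWith.of_dist_le_mul fun s hs t ht => ?_
  rw [dist_eq_norm, hAC s hs, hAC t ht, add_sub_add_left_eq_sub,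
    intervalIntegral.integral_interval_sub_left (hInt s hs) (hInt t ht), Real.dist_eq]
  refine intervalIntegral.norm_integral_le_of_norm_le_const_ae ?_
  filter_upwards [hd] with r hr hmem
  exact hr (le_trans (le_min ht hs) hmem.1.le)

/-- Almost everywhere differentiability of a primitive. -/
lemma ae_hasDerivAt_of_eq_integral {E : Type*} [NormedAddCommGroup E] [NormedSpace ℝ E]
    [CompleteSpace E]
    {x d : ℝ → E} (hInt : ∀ t, 0 ≤ t → IntervalIntegrable d volume 0 t)
    (hAC : ∀ t, 0 ≤ t → x t = x 0 + ∫ s in (0:ℝ)..t, d s) {T : ℝ} (hT : 0 ≤ T) :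
    ∀ᵐ t, t ∈ Set.uIcc 0 T → HasDerivAt x (d t) t := by
  filter_upwards [(hInt T hT).ae_hasDerivAt_integral, Measure.ae_ne volume (0:ℝ)] with t ht ht0 hmem
  have hpos : 0 < t := lt_of_le_of_ne (by rw [Set.uIcc_of_le hT] at hmem; exact hmem.1) ht0.symm
  refine ((ht hmem 0 Set.left_mem_uIcc).const_add (x 0)).congr_of_eventuallyEq ?_
  filter_upwards [lt_mem_nhds hpos] with s hs using hAC s hs.le


theorem continuous_discounted_occupation_measure_satisfies_Liouville {n m : ℕ}
    (X : Set (EuclideanSpace ℝ (Fin n))) (U : Set (EuclideanSpace ℝ (Fin m)))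
    (hX : IsCompact X) (hU : IsCompact U)
    (f : EuclideanSpace ℝ (Fin n) → EuclideanSpace ℝ (Fin m) → EuclideanSpace ℝ (Fin n))
    (hf : Continuous fun p : EuclideanSpace ℝ (Fin n) × EuclideanSpace ℝ (Fin m) => f p.1 p.2)
    (β : ℝ) (hβ : 0 < β)
    (x0 : EuclideanSpace ℝ (Fin n)) (hx0 : x0 ∈ X)
    -- the trajectory, staying in `X`, starting at `x0`
    (x : ℝ → EuclideanSpace ℝ (Fin n)) (hxX : ∀ t, 0 ≤ t → x t ∈ X) (hinit : x 0 = x0)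
    -- the relaxed control: a family of Borel probability measures on `U`, measurable in `t`
    (ν : ℝ → Measure (EuclideanSpace ℝ (Fin m)))
    (hνprob : ∀ t, IsProbabilityMeasure (ν t))
    (hνmeas : Measurable ν)
    (hνU : ∀ t, 0 ≤ t → msupport (ν t) ⊆ U)
    -- local absolute continuity of `x` with a.e. derivative `d`
    (d : ℝ → EuclideanSpace ℝ (Fin n))
    (hInt : ∀ t, 0 ≤ t → IntervalIntegrable d volume 0 t)
    (hAC : ∀ t, 0 ≤ t → x t = x 0 + ∫ s in (0:ℝ)..t, d s)
    -- `ẋ(t) = ∫_U f(x(t), u) dν_t(u)` for a.e. `t ≥ 0`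
    (hode : ∀ᵐ t ∂(volume.restrict (Set.Ici (0:ℝ))), d t = ∫ u, f (x t) u ∂(ν t))
    -- the discounted occupation measure: `μ(A × B) = ∫_0^∞ e^{-βt} 1_A(x(t)) ν_t(B) dt`
    (μ : Measure (EuclideanSpace ℝ (Fin n) × EuclideanSpace ℝ (Fin m)))
    (hμ : ∀ (A : Set (EuclideanSpace ℝ (Fin n))) (B : Set (EuclideanSpace ℝ (Fin m))),
      MeasurableSet A → MeasurableSet B →
      μ (A ×ˢ B) = ∫⁻ t in Set.Ici (0:ℝ),
        ENNReal.ofReal (Real.exp (-β * t)) * A.indicator (fun _ => (1:ℝ≥0∞)) (x t) * ν t B) :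
    IsFiniteMeasure μ ∧
    msupport μ ⊆ X ×ˢ U ∧
    μ (X ×ˢ U) = ENNReal.ofReal (1 / β) ∧
    LiouvilleC f β (Measure.dirac x0) μ := by
  have hIoi : volume.restrict (Set.Ici (0:ℝ)) = volume.restrict (Set.Ioi 0) :=
    (Measure.restrict_congr_set Ioi_ae_eq_Ici).symm
  simp only [hIoi] at hμ
  have hxlip : ∃ C : NNReal, LipschitzOnWith C x (Set.Ici 0) := by
    obtain ⟨C, hC⟩ := (hX.prod hU).exists_bound_of_continuousOn hf.continuousOn
    refine ⟨C.toNNReal, lipschitzOnWith_of_eq_integral hInt hAC ?_⟩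
    filter_upwards [(ae_restrict_iff' measurableSet_Ici).1 hode] with t ht ht0
    rw [ht ht0]
    have := hνprob t
    have hle : ∀ᵐ u ∂ν t, ‖f (x t) u‖ ≤ C :=
      (ae_mem_of_msupport_subset (hνU t ht0)).mono fun u hu => hC (x t, u) ⟨hxX t ht0, hu⟩
    exact (norm_integral_le_of_norm_le_const hle).trans (by simp)
  obtain ⟨C, hC⟩ := hxlip
  let κ : ProbabilityTheory.Kernel ℝ (EuclideanSpace ℝ (Fin m)) := ⟨ν, hνmeas⟩
  have hκ : ∀ t, κ t = ν t := fun _ => rfl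
  have : ProbabilityTheory.IsMarkovKernel κ := ⟨hνprob⟩
  let y : ℝ → EuclideanSpace ℝ (Fin n) := fun t => x (max t 0)
  have hy : Continuous y :=
    hC.continuousOn.comp_continuous (by fun_prop) fun t => le_max_right t 0
  have hyx : ∀ t, 0 ≤ t → y t = x t := fun t ht => by simp only [y, max_eq_left ht]
  have huniv : μ Set.univ = ENNReal.ofReal (1 / β) := by
    rw [← Set.univ_prod_univ, hμ _ _ .univ .univ]
    simp only [Set.indicator_univ, mul_one, measure_univ]
    exact lintegral_exp_neg_mul_Ioi hβ
  have hfin : IsFiniteMeasure μ := ⟨huniv ▸ ENNReal.ofReal_lt_top⟩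
  have hocc : μ = discountedOccupation β y κ := by
    refine Measure.ext_prod fun {A B} hA hB => ?_
    rw [hμ A B hA hB, discountedOccupation_prod hy.measurable hA hB]
    refine setLIntegral_congr_fun measurableSet_Ioi fun t ht => ?_
    simp only [hyx t (le_of_lt ht), hκ]
  have hmass : μ (X ×ˢ U) = ENNReal.ofReal (1 / β) := by
    rw [hμ X U hX.measurableSet hU.measurableSet, ← lintegral_exp_neg_mul_Ioi hβ]
    refine setLIntegral_congr_fun measurableSet_Ioi fun t ht => ?_
    have hone : ν t U = 1 :=
      prob_compl_eq_zero_iff hU.measurableSet |>.1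
        (ae_mem_of_msupport_subset (hνU t (le_of_lt ht)))
    simp [hone, hxX t (le_of_lt ht)]
  have hae : ∀ᵐ p ∂μ, p ∈ X ×ˢ U :=
    (ae_mem_iff_measure_eq (hX.prod hU).measurableSet.nullMeasurableSet).2 (hmass.trans huniv.symm)
  refine ⟨hfin, ?_, hmass, ?_⟩
  · rw [msupport_eq_support]
    exact Measure.support_subset_of_isClosed (hX.prod hU).isClosed hae
  intro v hv
  have hg₁ : Continuous fun p : EuclideanSpace ℝ (Fin n) × EuclideanSpace ℝ (Fin m) => v p.1 :=
    hv.continuous.comp continuous_fst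
  have hg₂ : Continuous fun p : EuclideanSpace ℝ (Fin n) × EuclideanSpace ℝ (Fin m) =>
      fderiv ℝ v p.1 (f p.1 p.2) :=
    ((hv.continuous_fderiv one_ne_zero).comp continuous_fst).clm_apply hf
  have hi₁ := (hX.prod hU).integrable_of_continuous_of_ae_mem hg₁ hae
  have hi₂ := (hX.prod hU).integrable_of_continuous_of_ae_mem hg₂ hae
  rw [hocc] at hi₁ hi₂
  obtain ⟨hI₁, he₁⟩ := integral_discountedOccupation hy.measurable hg₁.stronglyMeasurable hi₁
  obtain ⟨hI₂, he₂⟩ := integral_discountedOccupation hy.measurable hg₂.stronglyMeasurable hi₂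
  rw [← hocc] at he₁ he₂
  rw [he₁, he₂, integral_dirac]
  set G₁ : ℝ → ℝ := fun t => Real.exp (-β * t) * ∫ _, v (y t) ∂κ t with hG₁
  set G₂ : ℝ → ℝ := fun t => Real.exp (-β * t) * ∫ u, fderiv ℝ v (y t) (f (y t) u) ∂κ t with hG₂
  have hderiv : ∀ T, 0 ≤ T → ∀ᵐ t, t ∈ Set.uIcc 0 T →
      HasDerivAt (fun t => Real.exp (-β * t) * v (x t)) (G₂ t - β * G₁ t) t := by
    intro T hT
    filter_upwards [ae_hasDerivAt_of_eq_integral hInt hAC hT,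
      (ae_restrict_iff' measurableSet_Ici).1 hode] with t htd hto hmem
    have ht0 : 0 ≤ t := by
      rw [Set.uIcc_of_le hT] at hmem
      exact hmem.1
    have := hνprob t
    have hfi : Integrable (fun u => f (x t) u) (ν t) :=
      hU.integrable_of_continuous_of_ae_mem (hf.comp (Continuous.prodMk_right (x t)))
        (ae_mem_of_msupport_subset (hνU t ht0))
    have hv' : HasDerivAt (fun t => v (x t)) (fderiv ℝ v (x t) (d t)) t :=
      ((hv.differentiable one_ne_zero) (x t)).hasFDerivAt.comp_hasDerivAt t (htd hmem)
    have hexp : HasDerivAt (fun t : ℝ => Real.exp (-β * t)) (Real.exp (-β * t) * (-β)) t := by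
      simpa using ((hasDerivAt_id t).const_mul (-β)).exp
    refine (hexp.mul hv').congr_deriv ?_
    simp only [hG₁, hG₂, hyx t ht0, hκ, (fderiv ℝ v (x t)).integral_comp_comm hfi, ← hto ht0,
      integral_const, probReal_univ, one_smul]
    ring
  have hftc : ∀ T, 0 ≤ T →
      ∫ t in (0:ℝ)..T, (G₂ t - β * G₁ t) = Real.exp (-β * T) * v (x T) - v x0 := by
    intro T hT
    have hψ : ContDiff ℝ 1 fun q : ℝ × EuclideanSpace ℝ (Fin n) => Real.exp (-β * q.1) * v q.2 := by
      fun_prop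
    have hsub : Set.uIcc 0 T ⊆ Set.Ici 0 := by
      rw [Set.uIcc_of_le hT]
      exact Set.Icc_subset_Ici_self
    have hz := (LipschitzWith.id.lipschitzOnWith (s := Set.uIcc 0 T)).prodMk (hC.mono hsub)
    simpa [hinit] using hψ.integral_eq_sub_of_comp_lipschitzOnWith hz (hderiv T hT)
  have hlim₁ := intervalIntegral_tendsto_integral_Ioi 0 (hI₂.sub (hI₁.const_mul β))
    Filter.tendsto_id
  have hlim₂ : Filter.Tendsto (fun T => Real.exp (-β * T) * v (x T) - v x0) Filter.atTop
      (nhds (0 - v x0)) := by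
    refine Filter.Tendsto.sub_const ?_ _
    obtain ⟨M, hM⟩ := hX.exists_bound_of_continuousOn hv.continuous.continuousOn
    have hexp : Filter.Tendsto (fun T : ℝ => Real.exp (-β * T)) Filter.atTop (nhds 0) :=
      Real.tendsto_exp_atBot.comp (Filter.tendsto_id.const_mul_atTop_of_neg (by linarith))
    refine hexp.zero_mul_isBoundedUnder_le ⟨M, ?_⟩
    rw [Filter.eventually_map]
    filter_upwards [Filter.eventually_ge_atTop 0] with T hT using hM _ (hxX T hT)
  have hlim := tendsto_nhds_unique (hlim₁.congr' ?_) hlim₂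
  · rw [integral_sub' hI₂ (hI₁.const_mul β), integral_const_mul] at hlim
    linarith
  · filter_upwards [Filter.eventually_ge_atTop 0] with T hT using hftc T hT
end

section
/- Let X ⊆ ℝⁿ be compact, β > 0, let x : [0,∞) → X be locally absolutely continuous with essentially bounded derivative, and let v : ℝⁿ → ℝ be continuously differentiable. Then the function t ↦ e^{−βt} ∇v(x(t)) · ẋ(t) is Lebesgue integrable on [0,∞) and ∫_0^∞ e^{−βt} ∇v(x(t)) · ẋ(t) dt = β ∫_0^∞ e^{−βt} v(x(t)) dt − v(x(0)); in particular the boundary term at infinity vanishes because X is bounded. -/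
open MeasureTheory

/-- The indefinite integral of a function essentially bounded by `C` is `C`-Lipschitz. -/
theorem lipschitzOnWith_of_eq_add_integral {E : Type*} [NormedAddCommGroup E] [NormedSpace ℝ E]
    {x d : ℝ → E} {C : ℝ}
    (hInt : ∀ t, 0 ≤ t → IntervalIntegrable d volume 0 t)
    (hAC : ∀ t, 0 ≤ t → x t = x 0 + ∫ s in (0:ℝ)..t, d s)
    (hbd : ∀ᵐ t ∂(volume.restrict (Set.Ici (0:ℝ))), ‖d t‖ ≤ C) :
    LipschitzOnWith C.toNNReal x (Set.Ici 0) := by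
  refine LipschitzOnWith.of_dist_le_mul fun s hs t ht => ?_
  rw [Set.mem_Ici] at hs ht
  rw [dist_eq_norm, hAC s hs, hAC t ht, add_sub_add_left_eq_sub,
    intervalIntegral.integral_interval_sub_left (hInt s hs) (hInt t ht), Real.dist_eq]
  refine intervalIntegral.norm_integral_le_of_norm_le_const_ae ?_
  filter_upwards [(ae_restrict_iff' measurableSet_Ici).1 hbd] with r hr hrmem
  exact (hr ((le_min ht hs).trans hrmem.1.le)).trans (Real.le_coe_toNNReal C)

theorem ae_hasDerivAt_of_eq_add_integral {E : Type*} [NormedAddCommGroup E] [NormedSpace ℝ E]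
    [CompleteSpace E] {x d : ℝ → E}
    (hInt : ∀ t, 0 ≤ t → IntervalIntegrable d volume 0 t)
    (hAC : ∀ t, 0 ≤ t → x t = x 0 + ∫ s in (0:ℝ)..t, d s) (T : ℝ) (hT : 0 ≤ T) :
    ∀ᵐ t, t ∈ Set.Ioc 0 T → HasDerivAt x (d t) t := by
  filter_upwards [(hInt T hT).ae_hasDerivAt_integral] with t ht htT
  rw [Set.uIcc_of_le hT] at ht
  refine ((ht ⟨htT.1.le, htT.2⟩ 0 ⟨le_rfl, hT⟩).const_add (x 0)).congr_of_eventuallyEq ?_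
  filter_upwards [eventually_gt_nhds htT.1] with s hs using hAC s hs.le

theorem aestronglyMeasurable_restrict_Ici_of_intervalIntegrable {E : Type*}
    [NormedAddCommGroup E] {d : ℝ → E} (hInt : ∀ t, 0 ≤ t → IntervalIntegrable d volume 0 t) :
    AEStronglyMeasurable d (volume.restrict (Set.Ici (0:ℝ))) := by
  have hU : (⋃ k : ℕ, Set.Ioc (0:ℝ) k) = Set.Ioi 0 := by
    ext t
    simp only [Set.mem_iUnion, Set.mem_Ioc, Set.mem_Ioi]
    exact ⟨fun ⟨_, h⟩ => h.1, fun h => (exists_nat_ge t).imp fun _ hk => ⟨h, hk⟩⟩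
  rw [← Measure.restrict_congr_set Ioi_ae_eq_Ici, ← hU, aestronglyMeasurable_iUnion_iff]
  exact fun k => (hInt k k.cast_nonneg).1.aestronglyMeasurable

/-- A bounded function times a decaying exponential is integrable on the half-line. -/
theorem integrableOn_exp_mul_of_ae_bound {β M : ℝ} (hβ : 0 < β) {f : ℝ → ℝ}
    (hf : AEStronglyMeasurable f (volume.restrict (Set.Ici (0:ℝ))))
    (hM : ∀ᵐ t ∂(volume.restrict (Set.Ici (0:ℝ))), ‖f t‖ ≤ M) :
    IntegrableOn (fun t => Real.exp (-β * t) * f t) (Set.Ici (0:ℝ)) := by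
  have hexp : IntegrableOn (fun t => Real.exp (-β * t)) (Set.Ici (0:ℝ)) :=
    (integrableOn_Ici_iff_integrableOn_Ioi).2 (integrableOn_exp_mul_Ioi (neg_lt_zero.2 hβ) 0)
  exact Integrable.mul_bdd hexp hf hM

open Filter Topology

/-- Discounted integration by parts over the infinite horizon: if `x : [0,∞) → X ⊆ ℝⁿ`
(`X` compact) is locally absolutely continuous (encoded via the integral representation
`x t = x 0 + ∫_0^t d` with `d` its a.e. derivative) with essentially bounded derivative,
and `v` is continuously differentiable, then `t ↦ e^{-βt} ∇v(x(t))·ẋ(t)` is Lebesgue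
integrable on `[0,∞)` and
`∫_0^∞ e^{-βt} ∇v(x(t))·ẋ(t) dt = β ∫_0^∞ e^{-βt} v(x(t)) dt − v(x(0))`. -/
theorem discounted_integration_by_parts {n : ℕ}
    (X : Set (EuclideanSpace ℝ (Fin n))) (hX : IsCompact X)
    (β : ℝ) (hβ : 0 < β)
    (x d : ℝ → EuclideanSpace ℝ (Fin n))
    (hxX : ∀ t, 0 ≤ t → x t ∈ X)
    (hInt : ∀ t, 0 ≤ t → IntervalIntegrable d volume 0 t)
    (hAC : ∀ t, 0 ≤ t → x t = x 0 + ∫ s in (0:ℝ)..t, d s)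
    (C : ℝ) (hbd : ∀ᵐ t ∂(volume.restrict (Set.Ici (0:ℝ))), ‖d t‖ ≤ C)
    (v : EuclideanSpace ℝ (Fin n) → ℝ) (hv : ContDiff ℝ 1 v) :
    IntegrableOn (fun t => Real.exp (-β * t) * fderiv ℝ v (x t) (d t)) (Set.Ici (0:ℝ))
      volume ∧
    ∫ t in Set.Ici (0:ℝ), Real.exp (-β * t) * fderiv ℝ v (x t) (d t)
      = β * (∫ t in Set.Ici (0:ℝ), Real.exp (-β * t) * v (x t)) - v (x 0) := by
  have hLip := lipschitzOnWith_of_eq_add_integral hInt hAC hbd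
  have hxc : ContinuousOn x (Set.Ici 0) := hLip.continuousOn
  have hv' : Continuous (fderiv ℝ v) := hv.continuous_fderiv one_ne_zero
  obtain ⟨M, hM⟩ := hX.exists_bound_of_continuousOn hv.continuous.continuousOn
  obtain ⟨M', hM'⟩ := hX.exists_bound_of_continuousOn hv'.continuousOn
  obtain ⟨K, hK⟩ :=
    hv.locallyLipschitz.locallyLipschitzOn.exists_lipschitzOnWith_of_compact hX
  have hvx : LipschitzOnWith (K * C.toNNReal) (v ∘ x) (Set.Ici 0) := hK.comp hLip hxX
  have hvalInt : IntegrableOn (fun t => Real.exp (-β * t) * v (x t)) (Set.Ici (0:ℝ)) := by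
    refine integrableOn_exp_mul_of_ae_bound (M := M) hβ
      ((hv.continuous.comp_continuousOn hxc).aestronglyMeasurable measurableSet_Ici) ?_
    filter_upwards [ae_restrict_mem measurableSet_Ici] with t ht using hM _ (hxX t ht)
  have hgradInt : IntegrableOn (fun t => Real.exp (-β * t) * fderiv ℝ v (x t) (d t))
      (Set.Ici (0:ℝ)) := by
    refine integrableOn_exp_mul_of_ae_bound (M := M' * C) hβ
      ((ContinuousLinearMap.id ℝ _).aestronglyMeasurable_comp₂
        ((hv'.comp_continuousOn hxc).aestronglyMeasurable measurableSet_Ici)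
        (aestronglyMeasurable_restrict_Ici_of_intervalIntegrable hInt)) ?_
    filter_upwards [hbd, ae_restrict_mem measurableSet_Ici] with t hdt ht
    exact (fderiv ℝ v (x t)).le_of_opNorm_le_of_le (hM' _ (hxX t ht)) hdt
  refine ⟨hgradInt, ?_⟩
  have hsum : IntegrableOn (fun t => Real.exp (-β * t) * fderiv ℝ v (x t) (d t)
      - β * (Real.exp (-β * t) * v (x t))) (Set.Ici (0:ℝ)) := hgradInt.sub (hvalInt.const_mul β)
  have hFTC : ∀ T, 0 ≤ T →
      ∫ t in (0:ℝ)..T, (Real.exp (-β * t) * fderiv ℝ v (x t) (d t)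
        - β * (Real.exp (-β * t) * v (x t))) = Real.exp (-β * T) * v (x T) - v (x 0) := by
    intro T hT
    have hexpAC : AbsolutelyContinuousOnInterval (fun t => Real.exp (-β * t)) 0 T :=
      ContDiffOn.absolutelyContinuousOnInterval (by fun_prop)
    have hvAC : AbsolutelyContinuousOnInterval (v ∘ x) 0 T :=
      (hvx.mono (Set.uIcc_of_le hT ▸ Set.Icc_subset_Ici_self)).absolutelyContinuousOnInterval
    have key := hexpAC.integral_deriv_mul_eq_sub hvAC
    simp only [Function.comp_apply, mul_zero, Real.exp_zero, one_mul] at key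
    rw [← key]
    refine intervalIntegral.integral_congr_ae ?_
    filter_upwards [ae_hasDerivAt_of_eq_add_integral hInt hAC T hT] with t ht htT
    rw [Set.uIoc_of_le hT] at htT
    have hexp : HasDerivAt (fun t => Real.exp (-β * t)) (Real.exp (-β * t) * -β) t := by
      simpa using ((hasDerivAt_id t).const_mul (-β)).exp
    rw [hexp.deriv, ((hv.differentiable one_ne_zero (x t)).hasFDerivAt.comp_hasDerivAt t
      (ht htT)).deriv]
    ring
  have hbdry : Tendsto (fun T => Real.exp (-β * T) * v (x T)) atTop (𝓝 0) := by
    refine Tendsto.zero_mul_isBoundedUnder_le ?_ ?_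
    · exact Real.tendsto_exp_atBot.comp (tendsto_id.const_mul_atTop_of_neg (neg_lt_zero.2 hβ))
    · refine isBoundedUnder_of_eventually_le (a := M) ?_
      filter_upwards [eventually_ge_atTop 0] with T hT using hM _ (hxX T hT)
  have hlim := intervalIntegral_tendsto_integral_Ioi 0
    ((integrableOn_Ici_iff_integrableOn_Ioi).1 hsum) tendsto_id
  have hlim' := (hbdry.sub_const (v (x 0))).congr'
    ((eventually_ge_atTop 0).mono fun T hT => (hFTC T hT).symm)
  have heq := tendsto_nhds_unique hlim hlim'
  rw [← integral_Ici_eq_integral_Ioi, integral_sub hgradInt (hvalInt.const_mul β),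
    integral_const_mul] at heq
  linarith
end
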